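/- arXiv:1904.05209 — 3 statements merged into one kernel-verified Lean document; each statement's English description precedes it below -/
import Mathlib

section
/- Fix θ∈Θ and u∈(0,1). In the recursive system with G satisfying the Lipschitz condition of the context (constants β∈(0,1), r_W ≥ 0), suppose: (a) for each v near u there are stationary-in-t families W*_t(θ|v) and Z*_t(θ|v) with Z*_t(θ|v) = G(W*_{t−1}(θ|v), Z*_{t−1}(θ|v); θ) a.s., sup_v E‖W*_t(θ|v)‖^{p_W} < ∞, sup_v E‖Z*_t(θ|v)‖^{p_Z} < ∞ (p_Z := p_W/(r_W+1)), and E[‖W*_t(θ|v)−W*_t(θ|v′)‖^{p_W}]^{1/p_W} ≤ C|v−v′| and E[‖Z*_t(θ|v)−Z*_t(θ|v′)‖^{p_Z}]^{1/p_Z} ≤ C|v−v′|; (b) W*_t(θ|·) is time-differentiable at u in the L_{α_W} sense: there is a stationary process ∂_uW*_t(θ|u) with E‖∂_uW*_t(θ|u)‖^{α_W} < ∞ and E[‖W*_t(θ|u+Δ) − W*_t(θ|u) − Δ·∂_uW*_t(θ|u)‖^{α_W}]^{1/α_W} = o(|Δ|); (c) (w,z) ↦ G(w,z;θ) is continuously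 differentiable, with ‖∂_zG(w,z;θ)‖ ≤ β and ‖∂_wG(w,z;θ)‖ ≤ C(1+‖w‖^{r_W}). Then, with α_Z := p_W·α_W/(p_W + r_W·α_W), the recursion ∂_uZ*_t(θ|u) = ∂_zG(W*_{t−1}(θ|u), Z*_{t−1}(θ|u); θ)·∂_uZ*_{t−1}(θ|u) + ∂_wG(W*_{t−1}(θ|u), Z*_{t−1}(θ|u); θ)·∂_uW*_{t−1}(θ|u) defines a stationary process with E‖∂_uZ*_t(θ|u)‖^{α_Z} < ∞, and Z*_t(θ|·) is time-differentiable at u in the L_{α_Z} sense with this derivative: E[‖Z*_t(θ|u+Δ) − Z*_t(θ|u) − Δ·∂_uZ*_t(θ|u)‖^{α_Z}]^{1/α_Z} = o(|Δ|) as Δ→0. -/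
/-!
Write `W_v, Z_v` for the families, `D_Δ = (Z_{u+Δ} - Z_u)/Δ` and `E_Δ = (W_{u+Δ} - W_u)/Δ`. Since `T`
need not be invertible, the derivative of `Z` cannot be built by solving the linearised recursion
backwards in time; it is obtained instead as the limit of `D_Δ` in `L^α`, `α = α_Z`, where `α < 1`
is possible, so that all estimates are made on `α`-th powers.

The engine is `lintegral_le_of_contraction`: a finite `X ≥ 0` with `X ∘ T ≤ b X + Y` and `b < 1` has
`E X ≤ E Y / (1 - b)`, because `T` preserves the measure. Applied to the excess of `‖D_Δ‖^α` over a
level (`EventuallyUI.of_contraction`), it transfers uniform integrability from the driving terms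
`(growth^rW ‖E_Δ‖)^α ≤ growth^pW + ‖E_Δ‖^αW` to `‖D_Δ‖^α`.

Let `A` and `B` be the partial derivatives of `G` at `(W_u, Z_u)`. The defect
`ρ_Δ = ‖D_Δ ∘ T - A D_Δ - B ∂W‖` tends to `0` in `L^α`: the part `B (E_Δ - ∂W)` by Hölder's
inequality with `1/α = 1/αW + rW/pW`, and the linearisation error of `G` because it is bounded by a
factor tending to `0` in probability times a uniformly integrable quantity. As `‖A‖ ≤ β`, the
differences `D_Δ - D_Δ'` satisfy a contractive recursion driven by `ρ_Δ + ρ_Δ'`, so `D_Δ` is Cauchy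
in `L^α`. Passing to the limit a.e. along a subsequence gives the linearised recursion.
-/

set_option maxHeartbeats 1000000
set_option synthInstance.maxHeartbeats 400000

open MeasureTheory ProbabilityTheory Filter Matrix
open scoped ENNReal NNReal Topology

noncomputable section

/-- `(E[X^p])^{1/p}` for a (nonnegative) real random quantity `X`. -/
def pMoment {Ω : Type*} [MeasurableSpace Ω] (P : Measure Ω) (p : ℝ) (X : Ω → ℝ) : ℝ≥0∞ :=
  (∫⁻ ω, ENNReal.ofReal (X ω) ^ p ∂P) ^ (1 / p)

/-- Partial Fréchet derivative of `G : ℝ^{dW} × ℝ^{dZ} → ℝ^{dZ}` in the `z`-variable. -/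
def partialZ {dW dZ : ℕ} (G : (Fin dW → ℝ) × (Fin dZ → ℝ) → (Fin dZ → ℝ))
    (w : Fin dW → ℝ) (z : Fin dZ → ℝ) : (Fin dZ → ℝ) →L[ℝ] (Fin dZ → ℝ) :=
  (fderiv ℝ G (w, z)).comp (ContinuousLinearMap.inr ℝ (Fin dW → ℝ) (Fin dZ → ℝ))

/-- Partial Fréchet derivative of `G : ℝ^{dW} × ℝ^{dZ} → ℝ^{dZ}` in the `w`-variable. -/
def partialW {dW dZ : ℕ} (G : (Fin dW → ℝ) × (Fin dZ → ℝ) → (Fin dZ → ℝ))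
    (w : Fin dW → ℝ) (z : Fin dZ → ℝ) : (Fin dW → ℝ) →L[ℝ] (Fin dZ → ℝ) :=
  (fderiv ℝ G (w, z)).comp (ContinuousLinearMap.inl ℝ (Fin dW → ℝ) (Fin dZ → ℝ))

/-! ### Power inequalities -/

lemma add_rpow_le_two_rpow_mul {α : ℝ} (hα : 0 ≤ α) (x y : ℝ≥0∞) :
    (x + y) ^ α ≤ 2 ^ α * (x ^ α + y ^ α) := by
  have h : x + y ≤ 2 * max x y := by
    rw [two_mul]; exact add_le_add (le_max_left _ _) (le_max_right _ _)
  calc (x + y) ^ α ≤ (2 * max x y) ^ α := ENNReal.rpow_le_rpow h hα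
    _ = 2 ^ α * (max x y) ^ α := ENNReal.mul_rpow_of_nonneg _ _ hα
    _ ≤ 2 ^ α * (x ^ α + y ^ α) := by
      gcongr
      rcases le_total x y with h | h
      · rw [max_eq_right h]; exact le_add_self
      · rw [max_eq_left h]; exact le_self_add

/-- Turns `x ≤ β y + e` into an affine inequality for `α`-th powers, still with contraction factor
`b < 1`. It replaces the triangle inequality of `L^α`, which fails for `α < 1`. -/
lemma rpow_contraction {α β : ℝ} (hα : 0 < α) (hβ : β ∈ Set.Ioo (0 : ℝ) 1) :
    ∃ b K : ℝ≥0∞, b < 1 ∧ K ≠ ⊤ ∧ ∀ x y e : ℝ≥0∞,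
      x ≤ ENNReal.ofReal β * y + e → x ^ α ≤ b * y ^ α + K * e ^ α := by
  obtain ⟨hβ0, hβ1⟩ := hβ
  -- `c` is any number strictly between `β` and `1`
  obtain ⟨c, hc0, hc1⟩ := exists_between hβ1
  have hcpos : 0 < c := hβ0.trans hc0
  have hd : ENNReal.ofReal (c - β) ≠ 0 := by simpa using hc0
  refine ⟨ENNReal.ofReal c ^ α, (ENNReal.ofReal β / ENNReal.ofReal (c - β) + 1) ^ α,
    ENNReal.rpow_lt_one (by simpa using hc1) hα, ?_, ?_⟩
  · refine ENNReal.rpow_ne_top_of_nonneg hα.le ?_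
    exact ENNReal.add_ne_top.2 ⟨ENNReal.div_ne_top ENNReal.ofReal_ne_top hd, by simp⟩
  · intro x y e h
    rw [← ENNReal.mul_rpow_of_nonneg _ _ hα.le, ← ENNReal.mul_rpow_of_nonneg _ _ hα.le]
    rcases le_total e (ENNReal.ofReal (c - β) * y) with he | he
    · refine le_add_right (ENNReal.rpow_le_rpow (h.trans ?_) hα.le)
      calc ENNReal.ofReal β * y + e ≤ ENNReal.ofReal β * y + ENNReal.ofReal (c - β) * y := by gcongr
        _ = ENNReal.ofReal c * y := by
          rw [← add_mul, ← ENNReal.ofReal_add hβ0.le (by linarith)]; congr 2; ring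
    · refine le_add_left (ENNReal.rpow_le_rpow (h.trans ?_) hα.le)
      have hy : y ≤ e / ENNReal.ofReal (c - β) := by
        rw [ENNReal.le_div_iff_mul_le (Or.inl hd) (Or.inl ENNReal.ofReal_ne_top), mul_comm]
        exact he
      calc ENNReal.ofReal β * y + e ≤ ENNReal.ofReal β * (e / ENNReal.ofReal (c - β)) + e := by gcongr
        _ = _ := by rw [add_mul, one_mul, div_eq_mul_inv, div_eq_mul_inv]; ring

lemma rpow_mul_rpow_le_add {s t : ℝ} (hs : 0 ≤ s) (ht : 0 ≤ t) (hst : s + t = 1)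
    (x y : ℝ≥0∞) : x ^ s * y ^ t ≤ x + y := by
  have : x ^ s * y ^ t ≤ max x y := by
    calc x ^ s * y ^ t ≤ (max x y) ^ s * (max x y) ^ t := by
          gcongr
          · exact le_max_left _ _
          · exact le_max_right _ _
      _ = max x y := by rw [← ENNReal.rpow_add_of_nonneg _ _ hs ht, hst, ENNReal.rpow_one]
  exact this.trans (max_le le_self_add le_add_self)

/-! ### Contractive recursions and uniform integrability -/

section probability

variable {Ω : Type*} [MeasurableSpace Ω] {P : Measure Ω}

/-- A nonnegative finite `X` with `X ∘ T ≤ b X + Y`, `b < 1`, satisfies `E X ≤ E Y / (1 - b)`.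
No integrability of `X` is assumed: the recursion is iterated on the truncations `min X M`, and
`E min (b ^ n X) M → 0`. -/
lemma lintegral_le_of_contraction [IsProbabilityMeasure P] {T : Ω → Ω} (hT : MeasurePreserving T P P) {X Y : Ω → ℝ≥0∞}
    (hX : Measurable X) (hXfin : ∀ ω, X ω ≠ ⊤) {b : ℝ≥0∞} (hb : b < 1)
    (h : ∀ᵐ ω ∂P, X (T ω) ≤ b * X ω + Y ω) :
    ∫⁻ ω, X ω ∂P ≤ (1 - b)⁻¹ * ∫⁻ ω, Y ω ∂P := by
  have hbt : b ≠ ⊤ := hb.ne_top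
  have step : ∀ (M : ℝ≥0∞) (n : ℕ), ∫⁻ ω, min (X ω) M ∂P ≤
      ∫⁻ ω, min (b ^ n * X ω) M ∂P + (∑ k ∈ Finset.range n, b ^ k) * ∫⁻ ω, Y ω ∂P := by
    intro M n
    induction n with
    | zero => simp
    | succ n ih =>
      refine ih.trans ?_
      rw [Finset.sum_range_succ, add_mul, ← add_assoc, add_right_comm]
      gcongr
      have hm : Measurable fun ω => min (b ^ n * X ω) M := by fun_prop
      rw [← hT.lintegral_comp hm, ← lintegral_const_mul' _ _ (ENNReal.pow_ne_top hbt),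
        ← lintegral_add_left (by fun_prop)]
      refine lintegral_mono_ae ?_
      filter_upwards [h] with ω hω
      calc min (b ^ n * X (T ω)) M ≤ min (b ^ n * (b * X ω + Y ω)) M := by gcongr
        _ = min (b ^ (n + 1) * X ω + b ^ n * Y ω) M := by congr 1; ring
        _ ≤ min (b ^ (n + 1) * X ω) M + b ^ n * Y ω := by
          rw [← min_add_add_right]
          exact min_le_min_left _ le_self_add
  have bound : ∀ M : ℝ≥0∞, M ≠ ⊤ →
      ∫⁻ ω, min (X ω) M ∂P ≤ (1 - b)⁻¹ * ∫⁻ ω, Y ω ∂P := by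
    intro M hM
    have hlim : Tendsto (fun n : ℕ => ∫⁻ ω, min (b ^ n * X ω) M ∂P) atTop (𝓝 0) := by
      have := tendsto_lintegral_of_dominated_convergence (μ := P)
        (F := fun (n : ℕ) ω => min (b ^ n * X ω) M) (f := fun _ => 0) (fun _ => M)
        (fun n => by fun_prop) (fun n => ae_of_all _ fun ω => min_le_right _ _)
        (by simpa using hM) (ae_of_all _ fun ω => by
          have h1 : Tendsto (fun n : ℕ => b ^ n * X ω) atTop (𝓝 (0 * X ω)) :=
            ENNReal.Tendsto.mul_const (ENNReal.tendsto_pow_atTop_nhds_zero_of_lt_one hb)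
              (Or.inr (hXfin ω))
          rw [zero_mul] at h1
          exact tendsto_of_tendsto_of_tendsto_of_le_of_le tendsto_const_nhds h1
            (fun _ => zero_le) (fun _ => min_le_left _ _))
      simpa using this
    have h2 : Tendsto (fun n : ℕ => ∫⁻ ω, min (b ^ n * X ω) M ∂P + (1 - b)⁻¹ * ∫⁻ ω, Y ω ∂P)
        atTop (𝓝 (0 + (1 - b)⁻¹ * ∫⁻ ω, Y ω ∂P)) := hlim.add tendsto_const_nhds
    rw [zero_add] at h2
    refine ge_of_tendsto' h2 fun n => (step M n).trans ?_
    gcongr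
    rw [← ENNReal.tsum_geometric]
    exact ENNReal.sum_le_tsum _
  have hsup : ∫⁻ ω, X ω ∂P = ⨆ n : ℕ, ∫⁻ ω, min (X ω) n ∂P := by
    rw [← lintegral_iSup (fun n => by fun_prop) (fun m n hmn ω => by
      dsimp only; gcongr)]
    refine lintegral_congr fun ω => ?_
    refine le_antisymm ?_ (iSup_le fun n => min_le_left _ _)
    obtain ⟨n, hn⟩ := ENNReal.exists_nat_gt (hXfin ω)
    exact le_iSup_of_le n (le_min le_rfl hn.le)
  rw [hsup]
  exact iSup_le fun n => bound n (ENNReal.natCast_ne_top n)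

/-- Uniform integrability of the family `F Δ` along `l`: the expected excess of `F Δ` over a high
level is eventually small. Subtraction is the truncated one of `ℝ≥0∞`, i.e. `(F Δ - M)⁺`. -/
def EventuallyUI (P : Measure Ω) (l : Filter ℝ) (F : ℝ → Ω → ℝ≥0∞) : Prop :=
  ∀ ε : ℝ≥0∞, ε ≠ 0 → ∃ M : ℝ≥0∞, M ≠ ⊤ ∧ ∀ᶠ Δ in l, ∫⁻ ω, (F Δ ω - M) ∂P ≤ ε

namespace EventuallyUI

variable {l : Filter ℝ} {F F' : ℝ → Ω → ℝ≥0∞}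

lemma mono (hF : EventuallyUI P l F) (h : ∀ᶠ Δ in l, ∀ᵐ ω ∂P, F' Δ ω ≤ F Δ ω) :
    EventuallyUI P l F' := by
  intro ε hε
  obtain ⟨M, hM, hF⟩ := hF ε hε
  refine ⟨M, hM, ?_⟩
  filter_upwards [hF, h] with Δ h1 h2
  refine le_trans (lintegral_mono_ae ?_) h1
  filter_upwards [h2] with ω hω
  gcongr

lemma add (hF : EventuallyUI P l F) (hF' : EventuallyUI P l F') (hm : ∀ Δ, Measurable (F Δ)) :
    EventuallyUI P l fun Δ ω => F Δ ω + F' Δ ω := by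
  intro ε hε
  obtain ⟨M, hM, h1⟩ := hF (ε / 2) (by simpa using hε)
  obtain ⟨M', hM', h2⟩ := hF' (ε / 2) (by simpa using hε)
  refine ⟨M + M', by simp [hM, hM'], ?_⟩
  filter_upwards [h1, h2] with Δ h1 h2
  calc ∫⁻ ω, (F Δ ω + F' Δ ω - (M + M')) ∂P ≤ ∫⁻ ω, ((F Δ ω - M) + (F' Δ ω - M')) ∂P :=
        lintegral_mono fun ω => add_tsub_add_le_tsub_add_tsub
    _ = ∫⁻ ω, (F Δ ω - M) ∂P + ∫⁻ ω, (F' Δ ω - M') ∂P :=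
        lintegral_add_left ((hm Δ).sub_const M) _
    _ ≤ ε / 2 + ε / 2 := add_le_add h1 h2
    _ = ε := ENNReal.add_halves ε

lemma const_mul (hF : EventuallyUI P l F) {K : ℝ≥0∞} (hK : K ≠ ⊤) :
    EventuallyUI P l fun Δ ω => K * F Δ ω := by
  intro ε hε
  obtain ⟨M, hM, h1⟩ := hF (ε / K) (ENNReal.div_ne_zero.2 ⟨hε, hK⟩)
  refine ⟨K * M, ENNReal.mul_ne_top hK hM, ?_⟩
  filter_upwards [h1] with Δ h1
  calc ∫⁻ ω, (K * F Δ ω - K * M) ∂P ≤ ∫⁻ ω, K * (F Δ ω - M) ∂P := by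
        refine lintegral_mono fun ω => ?_
        rw [tsub_le_iff_right, ← mul_add]
        gcongr
        exact le_tsub_add
    _ = K * ∫⁻ ω, (F Δ ω - M) ∂P := lintegral_const_mul' _ _ hK
    _ ≤ K * (ε / K) := by gcongr
    _ ≤ ε := ENNReal.mul_div_le

lemma of_tendsto (h : Tendsto (fun Δ => ∫⁻ ω, F Δ ω ∂P) l (𝓝 0)) : EventuallyUI P l F := by
  intro ε hε
  refine ⟨0, by simp, ?_⟩
  filter_upwards [ENNReal.tendsto_nhds_zero.1 h ε (pos_iff_ne_zero.2 hε)] with Δ hΔ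
  simpa using hΔ

lemma of_const {f : Ω → ℝ≥0∞} (hf : Measurable f) (hfi : ∫⁻ ω, f ω ∂P ≠ ⊤) :
    EventuallyUI P l fun _ => f := by
  intro ε hε
  have hlim : Tendsto (fun n : ℕ => ∫⁻ ω, (f ω - n) ∂P) atTop (𝓝 (∫⁻ _, 0 ∂P)) := by
    refine tendsto_lintegral_of_dominated_convergence f (fun n => by fun_prop)
      (fun n => ae_of_all _ fun ω => tsub_le_self) hfi ?_
    filter_upwards [ae_lt_top hf hfi] with ω hω
    obtain ⟨n, hn⟩ := ENNReal.exists_nat_gt hω.ne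
    refine tendsto_const_nhds.congr' ?_
    filter_upwards [eventually_ge_atTop n] with m hm
    exact (tsub_eq_zero_of_le (hn.le.trans (by exact_mod_cast hm))).symm
  rw [lintegral_zero] at hlim
  obtain ⟨n, hn⟩ := (ENNReal.tendsto_nhds_zero.1 hlim ε (pos_iff_ne_zero.2 hε)).exists
  exact ⟨n, by simp, Eventually.of_forall fun _ => hn⟩

/-- Uniform integrability passes through a contractive recursion. -/
lemma of_contraction [IsProbabilityMeasure P] {T : Ω → Ω} (hT : MeasurePreserving T P P) (hF' : EventuallyUI P l F')
    (hm : ∀ Δ, Measurable (F Δ)) (hfin : ∀ Δ ω, F Δ ω ≠ ⊤) {b : ℝ≥0∞} (hb : b < 1)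
    (h : ∀ᶠ Δ in l, ∀ᵐ ω ∂P, F Δ (T ω) ≤ b * F Δ ω + F' Δ ω) :
    EventuallyUI P l F := by
  intro ε hε
  have hb0 : 1 - b ≠ 0 := (tsub_pos_of_lt hb).ne'
  have hbt : 1 - b ≠ ⊤ := by simp
  obtain ⟨M, hM, h1⟩ := hF' ((1 - b) * ε) (mul_ne_zero hb0 hε)
  refine ⟨(1 - b)⁻¹ * M, ENNReal.mul_ne_top (by simpa using hb0) hM, ?_⟩
  filter_upwards [h1, h] with Δ h1 h
  -- the excess over the level `L = M / (1 - b)` satisfies the same recursion, because `L = b L + M`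
  set L := (1 - b)⁻¹ * M with hL
  have hLM : L = b * L + M := by
    have h3 : (1 - b) * L = M := by
      rw [hL, ← mul_assoc, ENNReal.mul_inv_cancel hb0 hbt, one_mul]
    calc L = (b + (1 - b)) * L := by rw [add_tsub_cancel_of_le hb.le, one_mul]
      _ = _ := by rw [add_mul, h3]
  have h2 := lintegral_le_of_contraction hT (X := fun ω => F Δ ω - L) (Y := fun ω => F' Δ ω - M)
    ((hm Δ).sub_const L) (fun ω => ne_top_of_le_ne_top (hfin Δ ω) tsub_le_self) hb (by
      filter_upwards [h] with ω hω
      calc F Δ (T ω) - L ≤ (b * F Δ ω + F' Δ ω) - (b * L + M) := by rw [← hLM]; gcongr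
        _ ≤ (b * F Δ ω - b * L) + (F' Δ ω - M) := add_tsub_add_le_tsub_add_tsub
        _ ≤ b * (F Δ ω - L) + (F' Δ ω - M) := by
          gcongr
          rw [tsub_le_iff_right, ← mul_add]
          gcongr
          exact le_tsub_add)
  refine h2.trans ?_
  calc (1 - b)⁻¹ * ∫⁻ ω, (F' Δ ω - M) ∂P ≤ (1 - b)⁻¹ * ((1 - b) * ε) := by gcongr
    _ = ε := by rw [← mul_assoc, ENNReal.inv_mul_cancel hb0 hbt, one_mul]

/-- Vitali-type statement: factors bounded by `1` and tending to `0` a.e. annihilate a uniformly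
integrable family in `L^1`. -/
lemma tendsto_mul [IsProbabilityMeasure P] (hF : EventuallyUI P l F) {s : ℕ → ℝ} (hs : Tendsto s atTop l)
    {η : ℕ → Ω → ℝ≥0∞} (hη : ∀ n, Measurable (η n)) (hη1 : ∀ n ω, η n ω ≤ 1)
    (hη0 : ∀ᵐ ω ∂P, Tendsto (fun n => η n ω) atTop (𝓝 0)) :
    Tendsto (fun n => ∫⁻ ω, η n ω * F (s n) ω ∂P) atTop (𝓝 0) := by
  rw [ENNReal.tendsto_nhds_zero]
  intro ε hε
  obtain ⟨M, hM, h1⟩ := hF (ε / 2) (by simpa using hε.ne')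
  have hlim : Tendsto (fun n : ℕ => ∫⁻ ω, η n ω * M ∂P) atTop (𝓝 (∫⁻ _, 0 ∂P)) := by
    refine tendsto_lintegral_of_dominated_convergence (fun _ => M) (fun n => by fun_prop)
      (fun n => ae_of_all _ fun ω => ?_) (by simpa using hM) ?_
    · exact mul_le_of_le_one_left zero_le (hη1 n ω)
    · filter_upwards [hη0] with ω hω
      have := ENNReal.Tendsto.mul_const hω (Or.inr hM)
      rwa [zero_mul] at this
  rw [lintegral_zero] at hlim
  filter_upwards [hs.eventually h1,
    ENNReal.tendsto_nhds_zero.1 hlim (ε / 2) (ENNReal.half_pos hε.ne')] with n hn1 hn2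
  calc ∫⁻ ω, η n ω * F (s n) ω ∂P ≤ ∫⁻ ω, (η n ω * M + (F (s n) ω - M)) ∂P := by
        refine lintegral_mono fun ω => ?_
        calc η n ω * F (s n) ω ≤ η n ω * (M + (F (s n) ω - M)) := by
              gcongr; exact le_add_tsub
          _ ≤ η n ω * M + (F (s n) ω - M) := by
              rw [mul_add]; gcongr; exact mul_le_of_le_one_left zero_le (hη1 n ω)
    _ = ∫⁻ ω, η n ω * M ∂P + ∫⁻ ω, (F (s n) ω - M) ∂P :=
        lintegral_add_left ((hη n).mul_const M) _
    _ ≤ ε / 2 + ε / 2 := add_le_add hn2 hn1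
    _ = ε := ENNReal.add_halves ε

lemma eventually_lintegral_le [IsProbabilityMeasure P] (hF : EventuallyUI P l F) :
    ∃ M : ℝ≥0∞, M ≠ ⊤ ∧ ∀ᶠ Δ in l, ∫⁻ ω, F Δ ω ∂P ≤ M := by
  obtain ⟨M, hM, h1⟩ := hF 1 one_ne_zero
  refine ⟨M + 1, by simp [hM], ?_⟩
  filter_upwards [h1] with Δ h1
  calc ∫⁻ ω, F Δ ω ∂P ≤ ∫⁻ ω, (M + (F Δ ω - M)) ∂P := lintegral_mono fun ω => le_add_tsub
    _ = M + ∫⁻ ω, (F Δ ω - M) ∂P := by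
      rw [lintegral_add_left measurable_const]; simp
    _ ≤ M + 1 := by gcongr

end EventuallyUI

/-! ### Subsequences and completeness -/

lemma exists_subseq_ae_tendsto_zero {f : ℕ → Ω → ℝ≥0∞} (hf : ∀ n, Measurable (f n))
    (h : Tendsto (fun n => ∫⁻ ω, f n ω ∂P) atTop (𝓝 0)) :
    ∃ φ : ℕ → ℕ, StrictMono φ ∧ ∀ᵐ ω ∂P, Tendsto (fun n => f (φ n) ω) atTop (𝓝 0) := by
  have h1 : ∀ k : ℕ, ∀ᶠ n in atTop, ∫⁻ ω, f n ω ∂P ≤ (2⁻¹ : ℝ≥0∞) ^ k := fun k =>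
    ENNReal.tendsto_nhds_zero.1 h _ (ENNReal.pow_pos (by simp) k)
  obtain ⟨φ, hφ, hφ2⟩ := extraction_forall_of_eventually h1
  refine ⟨φ, hφ, ?_⟩
  have h2 : ∫⁻ ω, ∑' k, f (φ k) ω ∂P ≠ ⊤ := by
    rw [lintegral_tsum fun k => (hf _).aemeasurable]
    refine ne_top_of_le_ne_top ?_ (ENNReal.tsum_le_tsum hφ2)
    rw [ENNReal.tsum_geometric]; simp
  filter_upwards [ae_lt_top (Measurable.tsum fun k => hf _) h2] with ω hω
  have := ENNReal.tendsto_cofinite_zero_of_tsum_ne_top hω.ne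
  rwa [Nat.cofinite_eq_atTop] at this

/-- Completeness of `L^α` for every `α > 0`, including `α < 1`, for a family indexed by a filter;
the limit is an a.e. limit along a subsequence of the prescribed sequence `s`. -/
lemma exists_limit_of_cauchy {d : ℕ} {α : ℝ} (hα : 0 < α) {l : Filter ℝ}
    {D : ℝ → Ω → (Fin d → ℝ)} (hD : ∀ Δ, Measurable (D Δ))
    (hC : Tendsto (fun p : ℝ × ℝ => ∫⁻ ω, ‖D p.1 ω - D p.2 ω‖ₑ ^ α ∂P) (l ×ˢ l) (𝓝 0))
    {s : ℕ → ℝ} (hs : Tendsto s atTop l) :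
    ∃ (φ : ℕ → ℕ) (g : Ω → (Fin d → ℝ)), StrictMono φ ∧ Measurable g ∧
      (∀ᵐ ω ∂P, Tendsto (fun n => D (s (φ n)) ω) atTop (𝓝 (g ω))) ∧
      Tendsto (fun Δ => ∫⁻ ω, ‖D Δ ω - g ω‖ₑ ^ α ∂P) l (𝓝 0) := by
  set ε : ℕ → ℝ≥0∞ := fun k => ((2⁻¹ : ℝ≥0∞) ^ k) ^ α * 2⁻¹ ^ k with hε
  have hεpos : ∀ k, 0 < ε k := fun k =>
    ENNReal.mul_pos (ENNReal.rpow_pos (ENNReal.pow_pos (by simp) k) (by simp)).ne'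
      (ENNReal.pow_pos (by simp) k).ne'
  have h1 : ∀ k : ℕ, ∀ᶠ n in atTop, ∀ m ≥ n,
      ∫⁻ ω, ‖D (s n) ω - D (s m) ω‖ₑ ^ α ∂P ≤ ε k := fun k => by
    have h2 := (hs.prodMap hs).eventually (ENNReal.tendsto_nhds_zero.1 hC (ε k) (hεpos k))
    rw [prod_atTop_atTop_eq, eventually_atTop] at h2
    obtain ⟨⟨a, b⟩, hab⟩ := h2
    filter_upwards [eventually_ge_atTop (max a b)] with n hn m hm
    exact hab (n, m) ⟨(le_max_left _ _).trans hn, (le_max_right _ _).trans (hn.trans hm)⟩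
  obtain ⟨φ, hφ, hφ2⟩ := extraction_forall_of_eventually h1
  have h3 : ∫⁻ ω, ∑' k, ((2 : ℝ≥0∞) ^ k) ^ α * ‖D (s (φ k)) ω - D (s (φ (k + 1))) ω‖ₑ ^ α ∂P ≠ ⊤ := by
    rw [lintegral_tsum fun k => by
      have := hD (s (φ k)); have := hD (s (φ (k+1))); fun_prop]
    refine ne_top_of_le_ne_top (b := ∑' k : ℕ, (2⁻¹ : ℝ≥0∞) ^ k) ?_ (ENNReal.tsum_le_tsum fun k => ?_)
    · rw [ENNReal.tsum_geometric]; simp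
    · rw [lintegral_const_mul' _ _ (ENNReal.rpow_ne_top_of_nonneg hα.le (by simp))]
      calc ((2 : ℝ≥0∞) ^ k) ^ α * ∫⁻ ω, ‖D (s (φ k)) ω - D (s (φ (k + 1))) ω‖ₑ ^ α ∂P
          ≤ ((2 : ℝ≥0∞) ^ k) ^ α * ε k := by
            gcongr; exact hφ2 k _ (hφ.monotone (Nat.le_succ k))
        _ = 2⁻¹ ^ k := by
            rw [hε]; dsimp only
            rw [← mul_assoc, ← ENNReal.mul_rpow_of_nonneg _ _ hα.le, ← mul_pow,
              ENNReal.mul_inv_cancel (by simp) (by simp)]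
            simp
  have hcau : ∀ᵐ ω ∂P, ∃ x, Tendsto (fun n => D (s (φ n)) ω) atTop (𝓝 x) := by
    filter_upwards [ae_lt_top (Measurable.tsum fun k => by
      have := hD (s (φ k)); have := hD (s (φ (k+1))); fun_prop) h3] with ω hω
    refine cauchySeq_tendsto_of_complete ?_
    set S := ∑' k, ((2 : ℝ≥0∞) ^ k) ^ α * ‖D (s (φ k)) ω - D (s (φ (k + 1))) ω‖ₑ ^ α
    have hSt : S ^ α⁻¹ ≠ ⊤ := ENNReal.rpow_ne_top_of_nonneg (by positivity) hω.ne
    refine cauchySeq_of_edist_le_geometric_two (S ^ α⁻¹) hSt fun k => ?_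
    have h4 := ENNReal.le_tsum (f := fun k => ((2 : ℝ≥0∞) ^ k) ^ α *
      ‖D (s (φ k)) ω - D (s (φ (k + 1))) ω‖ₑ ^ α) k
    rw [← ENNReal.mul_rpow_of_nonneg _ _ hα.le, ← ENNReal.le_rpow_inv_iff hα] at h4
    rw [edist_eq_enorm_sub, ENNReal.le_div_iff_mul_le (by simp) (by simp), mul_comm]
    exact h4
  obtain ⟨g, hg, hgl⟩ := measurable_limit_of_tendsto_metrizable_ae
    (fun n => (hD (s (φ n))).aemeasurable) hcau
  refine ⟨φ, g, hφ, hg, hgl, ?_⟩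
  rw [ENNReal.tendsto_nhds_zero]
  intro e he
  have h5 := (ENNReal.tendsto_nhds_zero.1 hC e he).curry
  filter_upwards [h5] with Δ hΔ
  have h6 := (hs.comp hφ.tendsto_atTop).eventually hΔ
  -- Fatou along the chosen subsequence
  calc ∫⁻ ω, ‖D Δ ω - g ω‖ₑ ^ α ∂P
      ≤ ∫⁻ ω, liminf (fun n => ‖D Δ ω - D (s (φ n)) ω‖ₑ ^ α) atTop ∂P := by
        refine lintegral_mono_ae ?_
        filter_upwards [hgl] with ω hω
        have : Tendsto (fun n => ‖D Δ ω - D (s (φ n)) ω‖ₑ ^ α) atTop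
            (𝓝 (‖D Δ ω - g ω‖ₑ ^ α)) :=
          (ENNReal.continuous_rpow_const.tendsto _).comp
            ((continuous_enorm.tendsto _).comp (tendsto_const_nhds.sub hω))
        rw [this.liminf_eq]
    _ ≤ liminf (fun n => ∫⁻ ω, ‖D Δ ω - D (s (φ n)) ω‖ₑ ^ α ∂P) atTop :=
        lintegral_liminf_le fun n => by
          have := hD Δ; have := hD (s (φ n)); fun_prop
    _ ≤ e := liminf_le_of_frequently_le' h6.frequently

/-! ### Moments and difference quotients -/

lemma tendsto_zero_of_enorm_rpow {V : Type*} [NormedAddCommGroup V] {p : ℝ} (hp : 0 < p)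
    {x : ℕ → V} (h : Tendsto (fun n => ‖x n‖ₑ ^ p) atTop (𝓝 0)) : Tendsto x atTop (𝓝 0) := by
  have h1 := (ENNReal.continuous_rpow_const (y := p⁻¹)).tendsto 0 |>.comp h
  rw [ENNReal.zero_rpow_of_pos (by positivity)] at h1
  have h2 : Tendsto (fun n => ‖x n‖ₑ) atTop (𝓝 0) := by
    refine h1.congr fun n => ?_
    simp only [Function.comp]
    rw [ENNReal.rpow_rpow_inv hp.ne']
  rw [tendsto_iff_edist_tendsto_0]
  simpa [edist_eq_enorm_sub] using h2

lemma lintegral_rpow_le_of_pMoment_le {p : ℝ} (hp : 0 < p) {X : Ω → ℝ} {c : ℝ≥0∞}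
    (h : pMoment P p X ≤ c) : ∫⁻ ω, ENNReal.ofReal (X ω) ^ p ∂P ≤ c ^ p := by
  rw [pMoment, one_div, ENNReal.rpow_inv_le_iff hp] at h
  exact h

/-- The normalised `L^α` error of a first-order expansion is the `L^α` error of the difference
quotient. -/
lemma pMoment_div {d : ℕ} {α : ℝ} (hα : 0 < α) {Δ : ℝ} (hΔ : Δ ≠ 0) (Y g : Ω → (Fin d → ℝ)) :
    pMoment P α (fun ω => ‖Y ω - Δ • g ω‖) / ENNReal.ofReal |Δ| =
      (∫⁻ ω, ‖Δ⁻¹ • Y ω - g ω‖ₑ ^ α ∂P) ^ (1 / α) := by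
  have hΔ' : 0 < |Δ| := abs_pos.2 hΔ
  have h0 : ENNReal.ofReal |Δ| ≠ 0 := by simpa using hΔ
  have h1 : ∀ ω, ENNReal.ofReal ‖Y ω - Δ • g ω‖ ^ α =
      ENNReal.ofReal |Δ| ^ α * ‖Δ⁻¹ • Y ω - g ω‖ₑ ^ α := fun ω => by
    rw [← ENNReal.mul_rpow_of_nonneg _ _ hα.le, ← ofReal_norm,
      ← ENNReal.ofReal_mul hΔ'.le, ← Real.norm_eq_abs, ← norm_smul, smul_sub, smul_inv_smul₀ hΔ]
  rw [pMoment]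
  simp_rw [h1]
  rw [lintegral_const_mul' _ _ (ENNReal.rpow_ne_top_of_nonneg hα.le ENNReal.ofReal_ne_top),
    ENNReal.mul_rpow_of_nonneg _ _ (by positivity), ← ENNReal.rpow_mul,
    mul_one_div_cancel hα.ne', ENNReal.rpow_one, mul_comm, ENNReal.mul_div_cancel_right h0 (by simp)]

/-- The difference quotient of `g` in the time parameter at `u` with step `Δ`. -/
def diffQuot {d : ℕ} (g : ℝ → Ω → (Fin d → ℝ)) (u Δ : ℝ) (ω : Ω) : Fin d → ℝ :=
  Δ⁻¹ • (g (u + Δ) ω - g u ω)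

lemma measurable_diffQuot {d : ℕ} {g : ℝ → Ω → (Fin d → ℝ)} (hg : ∀ v, Measurable (g v))
    (u Δ : ℝ) : Measurable (diffQuot g u Δ) :=
  ((hg (u + Δ)).sub (hg u)).const_smul Δ⁻¹

/-- A common upper bound, at least `1`, for `‖w‖` and `‖w'‖`; it controls the Lipschitz modulus of
`G` in `w`. -/
def growth {d : ℕ} (w w' : Fin d → ℝ) : ℝ≥0∞ := ENNReal.ofReal (1 + 2 * ‖w‖ + ‖w' - w‖)

/-! ### Bounds for the recursion map -/

section deterministic

variable {dW dZ : ℕ} {G : (Fin dW → ℝ) × (Fin dZ → ℝ) → (Fin dZ → ℝ)} {β C rW : ℝ}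

lemma partial_add (w : Fin dW → ℝ) (z : Fin dZ → ℝ) (e : Fin dW → ℝ) (d : Fin dZ → ℝ) :
    partialZ G w z d + partialW G w z e = fderiv ℝ G (w, z) (e, d) := by
  simp [partialZ, partialW, ← map_add]

lemma rpow_le_growth (hr : 0 ≤ rW) (w w' : Fin dW → ℝ) :
    1 + ‖w‖ ^ rW + ‖w'‖ ^ rW ≤ 3 * (1 + 2 * ‖w‖ + ‖w' - w‖) ^ rW := by
  have h1 := norm_nonneg w
  have h2 := norm_nonneg (w' - w)
  have h3 : ‖w'‖ ≤ ‖w‖ + ‖w' - w‖ := by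
    have := norm_add_le w (w' - w); rwa [add_sub_cancel] at this
  have e1 : 1 ≤ (1 + 2 * ‖w‖ + ‖w' - w‖) ^ rW := Real.one_le_rpow (by linarith) hr
  have e2 : ‖w‖ ^ rW ≤ (1 + 2 * ‖w‖ + ‖w' - w‖) ^ rW :=
    Real.rpow_le_rpow h1 (by linarith) hr
  have e3 : ‖w'‖ ^ rW ≤ (1 + 2 * ‖w‖ + ‖w' - w‖) ^ rW :=
    Real.rpow_le_rpow (norm_nonneg _) (by linarith) hr
  linarith

lemma ofReal_growth_mul (hC : 0 ≤ C) (w w' e : Fin dW → ℝ) :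
    ENNReal.ofReal (C * (3 * (1 + 2 * ‖w‖ + ‖w' - w‖) ^ rW) * ‖e‖) =
      ENNReal.ofReal (3 * C) * (growth w w' ^ rW * ‖e‖ₑ) := by
  have h : 0 < 1 + 2 * ‖w‖ + ‖w' - w‖ := by positivity
  rw [growth, ENNReal.ofReal_rpow_of_pos h, ← ofReal_norm,
    ← ENNReal.ofReal_mul (by positivity), ← ENNReal.ofReal_mul (by positivity)]
  congr 1; ring

lemma enorm_increment_le (hC : 0 ≤ C) (hβ : 0 ≤ β) (hr : 0 ≤ rW)
    (hGlip : ∀ (w w' : Fin dW → ℝ) (z z' : Fin dZ → ℝ),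
      ‖G (w, z) - G (w', z')‖ ≤
        C * (1 + ‖w‖ ^ rW + ‖w'‖ ^ rW) * ‖w - w'‖ + β * ‖z - z'‖)
    (w w' : Fin dW → ℝ) (z z' : Fin dZ → ℝ) (Δ : ℝ) :
    ‖Δ⁻¹ • (G (w', z') - G (w, z))‖ₑ ≤ ENNReal.ofReal β * ‖Δ⁻¹ • (z' - z)‖ₑ +
      ENNReal.ofReal (3 * C) * (growth w w' ^ rW * ‖Δ⁻¹ • (w' - w)‖ₑ) := by
  rw [← ofReal_growth_mul hC, ← ofReal_norm, ← ofReal_norm,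
    ← ENNReal.ofReal_mul hβ, ← ENNReal.ofReal_add (by positivity) (by positivity)]
  refine ENNReal.ofReal_le_ofReal ?_
  rw [norm_smul, norm_smul, norm_smul]
  have h1 := hGlip w w' z z'
  rw [norm_sub_rev, norm_sub_rev w, norm_sub_rev z] at h1
  have h2 := rpow_le_growth hr w w'
  calc ‖Δ⁻¹‖ * ‖G (w', z') - G (w, z)‖
      ≤ ‖Δ⁻¹‖ * (C * (3 * (1 + 2 * ‖w‖ + ‖w' - w‖) ^ rW) * ‖w' - w‖ + β * ‖z' - z‖) := by
        refine mul_le_mul_of_nonneg_left (h1.trans ?_) (norm_nonneg _)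
        gcongr
    _ = _ := by ring

lemma enorm_partialZ_le (hβ : 0 ≤ β) (hGz : ∀ w z, ‖partialZ G w z‖ ≤ β)
    (w : Fin dW → ℝ) (z d : Fin dZ → ℝ) :
    ‖partialZ G w z d‖ₑ ≤ ENNReal.ofReal β * ‖d‖ₑ := by
  rw [← ofReal_norm, ← ofReal_norm, ← ENNReal.ofReal_mul hβ]
  refine ENNReal.ofReal_le_ofReal (((partialZ G w z).le_opNorm d).trans ?_)
  gcongr
  exact hGz w z

lemma enorm_partialW_le (hC : 0 ≤ C) (hr : 0 ≤ rW)
    (hGw : ∀ w z, ‖partialW G w z‖ ≤ C * (1 + ‖w‖ ^ rW))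
    (w w' e : Fin dW → ℝ) (z : Fin dZ → ℝ) :
    ‖partialW G w z e‖ₑ ≤ ENNReal.ofReal (3 * C) * (growth w w' ^ rW * ‖e‖ₑ) := by
  rw [← ofReal_growth_mul hC, ← ofReal_norm]
  refine ENNReal.ofReal_le_ofReal (((partialW G w z).le_opNorm e).trans ?_)
  have h2 := rpow_le_growth hr w w'
  have h3 : 0 ≤ ‖w'‖ ^ rW := by positivity
  gcongr
  refine (hGw w z).trans ?_
  gcongr
  linarith

/-- Relative error of the first-order expansion of `G` at `x`, evaluated at `x'`. It equals `0` when
`x' = x`. -/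
def relRem (G : (Fin dW → ℝ) × (Fin dZ → ℝ) → (Fin dZ → ℝ))
    (x x' : (Fin dW → ℝ) × (Fin dZ → ℝ)) : ℝ :=
  ‖x' - x‖⁻¹ * ‖G x' - G x - fderiv ℝ G x (x' - x)‖

lemma measurable_relRem (hG : ContDiff ℝ 1 G) {x x' : Ω → (Fin dW → ℝ) × (Fin dZ → ℝ)}
    (hx : Measurable x) (hx' : Measurable x') : Measurable fun ω => relRem G (x ω) (x' ω) := by
  have hGm : Measurable G := hG.continuous.measurable
  have h1 : Measurable fun ω => fderiv ℝ G (x ω) (x' ω - x ω) :=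
    (hG.continuous_fderiv_apply one_ne_zero).measurable.comp (hx.prodMk (hx'.sub hx))
  unfold relRem
  exact ((hx'.sub hx).norm.inv).mul (((hGm.comp hx').sub (hGm.comp hx)).sub h1).norm

/-- The linearisation error of the difference quotient is at most the relative error times the size
of the quotients. -/
lemma enorm_rem_le (w w' : Fin dW → ℝ) (z z' : Fin dZ → ℝ) (Δ : ℝ) :
    ‖Δ⁻¹ • (G (w', z') - G (w, z)) -
        fderiv ℝ G (w, z) (Δ⁻¹ • (w' - w), Δ⁻¹ • (z' - z))‖ₑ ≤
      ENNReal.ofReal (relRem G (w, z) (w', z')) *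
        (‖Δ⁻¹ • (z' - z)‖ₑ + ‖Δ⁻¹ • (w' - w)‖ₑ) := by
  have hk : 0 ≤ relRem G (w, z) (w', z') := by unfold relRem; positivity
  rw [← ofReal_norm, ← ofReal_norm, ← ofReal_norm,
    ← ENNReal.ofReal_add (by positivity) (by positivity), ← ENNReal.ofReal_mul hk]
  refine ENNReal.ofReal_le_ofReal ?_
  have h1 : (Δ⁻¹ • (w' - w), Δ⁻¹ • (z' - z)) = Δ⁻¹ • ((w', z') - (w, z)) := rfl
  have h2 : ‖G (w', z') - G (w, z) - fderiv ℝ G (w, z) ((w', z') - (w, z))‖ =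
      relRem G (w, z) (w', z') * ‖(w', z') - (w, z)‖ := by
    unfold relRem
    by_cases h : (w', z') - (w, z) = 0
    · have h' : (w', z') = (w, z) := sub_eq_zero.1 h
      simp [h']
    · have := norm_ne_zero_iff.2 h
      field_simp
  have h3 : ‖(w', z') - (w, z)‖ ≤ ‖z' - z‖ + ‖w' - w‖ := by
    rw [Prod.mk_sub_mk, Prod.norm_mk]
    exact max_le (by linarith [norm_nonneg (z' - z)]) (by linarith [norm_nonneg (w' - w)])
  rw [h1, map_smul, ← smul_sub, norm_smul, h2, norm_smul, norm_smul, ← mul_add]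
  calc ‖Δ⁻¹‖ * (relRem G (w, z) (w', z') * ‖(w', z') - (w, z)‖)
      ≤ ‖Δ⁻¹‖ * (relRem G (w, z) (w', z') * (‖z' - z‖ + ‖w' - w‖)) := by gcongr
    _ = _ := by ring

lemma one_le_growth_rpow (hr : 0 ≤ rW) (w w' : Fin dW → ℝ) : 1 ≤ growth w w' ^ rW := by
  rcases hr.eq_or_lt with rfl | hr
  · simp
  · refine ENNReal.one_le_rpow ?_ hr
    rw [growth, ENNReal.one_le_ofReal]
    linarith [norm_nonneg w, norm_nonneg (w' - w)]

end deterministic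

end probability

/-- Theorem 6(iv) of the paper: time differentiability of the stationary
solution of the recursive system, with the derivative process solving the linearized
recursion. -/
theorem gar_time_differentiability
    {Ω : Type*} [MeasurableSpace Ω] (P : Measure Ω) [IsProbabilityMeasure P]
    {dW dZ : ℕ}
    (pW αW : ℝ) (hpW : 1 ≤ pW) (hαW : 1 ≤ αW)
    (β C : ℝ) (hβ : β ∈ Set.Ioo (0:ℝ) 1) (rW : ℝ) (hrW : 0 ≤ rW)
    (u : ℝ) (hu : u ∈ Set.Ioo (0:ℝ) 1) (δ₀ : ℝ) (hδ₀ : 0 < δ₀)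
    -- the recursion map (parameter θ fixed and suppressed)
    (G : (Fin dW → ℝ) × (Fin dZ → ℝ) → (Fin dZ → ℝ))
    (hGlip : ∀ (w w' : Fin dW → ℝ) (z z' : Fin dZ → ℝ),
      ‖G (w, z) - G (w', z')‖ ≤
        C * (1 + ‖w‖ ^ rW + ‖w'‖ ^ rW) * ‖w - w'‖ + β * ‖z - z'‖)
    -- (c) continuous differentiability of G with bounded partial derivatives
    (hGdiff : ContDiff ℝ 1 G)
    (hGz : ∀ w z, ‖partialZ G w z‖ ≤ β)
    (hGw : ∀ w z, ‖partialW G w z‖ ≤ C * (1 + ‖w‖ ^ rW))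
    -- (a) stationary families, represented through a measure-preserving map T
    (T : Ω → Ω) (hT : MeasurePreserving T P P)
    (gW : ℝ → Ω → (Fin dW → ℝ)) (gZ : ℝ → Ω → (Fin dZ → ℝ))
    (hgWmeas : ∀ v, Measurable (gW v)) (hgZmeas : ∀ v, Measurable (gZ v))
    (hrec : ∀ (t : ℕ), ∀ v ∈ Metric.ball u δ₀,
      ∀ᵐ ω ∂P, gZ v (T^[t + 1] ω) = G (gW v (T^[t] ω), gZ v (T^[t] ω)))
    (MW : ℝ) (hWmom : ∀ v ∈ Metric.ball u δ₀,
      (∫⁻ ω, ENNReal.ofReal ‖gW v ω‖ ^ pW ∂P) ≤ ENNReal.ofReal MW)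
    (MZ : ℝ) (hZmom : ∀ v ∈ Metric.ball u δ₀,
      (∫⁻ ω, ENNReal.ofReal ‖gZ v ω‖ ^ (pW / (rW + 1)) ∂P) ≤ ENNReal.ofReal MZ)
    (hWlipu : ∀ v ∈ Metric.ball u δ₀, ∀ v' ∈ Metric.ball u δ₀,
      pMoment P pW (fun ω => ‖gW v ω - gW v' ω‖) ≤ ENNReal.ofReal (C * |v - v'|))
    (hZlipu : ∀ v ∈ Metric.ball u δ₀, ∀ v' ∈ Metric.ball u δ₀,
      pMoment P (pW / (rW + 1)) (fun ω => ‖gZ v ω - gZ v' ω‖)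
        ≤ ENNReal.ofReal (C * |v - v'|))
    -- (b) time differentiability of W* at u in the L^{α_W} sense
    (gdW : Ω → (Fin dW → ℝ)) (hgdWmeas : Measurable gdW)
    (hdWmom : (∫⁻ ω, ENNReal.ofReal ‖gdW ω‖ ^ αW ∂P) < ⊤)
    (hdW : ∀ t : ℕ, Tendsto (fun Δ : ℝ =>
        pMoment P αW (fun ω =>
          ‖gW (u + Δ) (T^[t] ω) - gW u (T^[t] ω) - Δ • gdW (T^[t] ω)‖) /
          ENNReal.ofReal |Δ|) (𝓝[≠] (0:ℝ)) (𝓝 0)) :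
    -- conclusion: the linearized recursion defines the L^{α_Z} time derivative of Z*
    ∃ gdZ : Ω → (Fin dZ → ℝ),
      Measurable gdZ ∧
      (∀ t : ℕ, ∀ᵐ ω ∂P, gdZ (T^[t + 1] ω) =
        partialZ G (gW u (T^[t] ω)) (gZ u (T^[t] ω)) (gdZ (T^[t] ω)) +
          partialW G (gW u (T^[t] ω)) (gZ u (T^[t] ω)) (gdW (T^[t] ω))) ∧
      (∫⁻ ω, ENNReal.ofReal ‖gdZ ω‖ ^ (pW * αW / (pW + rW * αW)) ∂P) < ⊤ ∧
      (∀ t : ℕ, Tendsto (fun Δ : ℝ =>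
        pMoment P (pW * αW / (pW + rW * αW)) (fun ω =>
          ‖gZ (u + Δ) (T^[t] ω) - gZ u (T^[t] ω) - Δ • gdZ (T^[t] ω)‖) /
          ENNReal.ofReal |Δ|) (𝓝[≠] (0:ℝ)) (𝓝 0)) := by
  obtain ⟨hβ0, hβ1⟩ := id hβ
  have hpW0 : 0 < pW := by linarith
  have hαW0 : 0 < αW := by linarith
  have hC : 0 ≤ C := by
    have h1 := (norm_nonneg _).trans (hGw 0 0)
    have h2 : (0 : ℝ) < 1 + ‖(0 : Fin dW → ℝ)‖ ^ rW := by positivity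
    exact nonneg_of_mul_nonneg_left h1 h2
  have hpZ0 : 0 < pW / (rW + 1) := by positivity
  set α : ℝ := pW * αW / (pW + rW * αW) with hαdef
  have hden : 0 < pW + rW * αW := by positivity
  have hα : 0 < α := by positivity
  -- the Hölder exponents `s = rW α / pW`, `t = α / αW` encode `1/α = 1/αW + rW/pW`
  have hs0 : 0 ≤ rW * α / pW := by positivity
  have ht0 : 0 < α / αW := by positivity
  have hst : rW * α / pW + α / αW = 1 := by rw [hαdef]; field_simp; ring
  set l : Filter ℝ := 𝓝[≠] (0 : ℝ) with hl
  have hball : ∀ᶠ Δ in l, u + Δ ∈ Metric.ball u δ₀ := by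
    have : ∀ᶠ Δ in 𝓝 (0 : ℝ), Δ ∈ Metric.ball (0 : ℝ) δ₀ := Metric.ball_mem_nhds _ hδ₀
    filter_upwards [this.filter_mono nhdsWithin_le_nhds] with Δ hΔ
    simpa using hΔ
  have hne : ∀ᶠ Δ in l, Δ ≠ 0 := eventually_mem_nhdsWithin
  have hu0 : u ∈ Metric.ball u δ₀ := Metric.mem_ball_self hδ₀
  set D : ℝ → Ω → (Fin dZ → ℝ) := diffQuot gZ u with hD
  set E : ℝ → Ω → (Fin dW → ℝ) := diffQuot gW u with hE
  have hDm : ∀ Δ, Measurable (D Δ) := measurable_diffQuot hgZmeas u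
  have hEm : ∀ Δ, Measurable (E Δ) := measurable_diffQuot hgWmeas u
  set a : ℝ → Ω → ℝ≥0∞ := fun Δ ω => growth (gW u ω) (gW (u + Δ) ω) with ha
  have ham : ∀ Δ, Measurable (a Δ) := fun Δ => by
    have h1 := hgWmeas u
    have h2 := hgWmeas (u + Δ)
    simp only [ha, growth]
    fun_prop
  -- continuity in `L^p` of `W*` and `Z*` at `u`
  have small : ∀ {d : ℕ} {p : ℝ} (_ : 0 < p) (g : ℝ → Ω → (Fin d → ℝ)),
      (∀ v ∈ Metric.ball u δ₀, ∀ v' ∈ Metric.ball u δ₀,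
        pMoment P p (fun ω => ‖g v ω - g v' ω‖) ≤ ENNReal.ofReal (C * |v - v'|)) →
      Tendsto (fun Δ => ∫⁻ ω, ‖g (u + Δ) ω - g u ω‖ₑ ^ p ∂P) l (𝓝 0) := by
    intro d p hp g hg
    have h1 : Tendsto (fun Δ : ℝ => ENNReal.ofReal (C * |Δ|) ^ p) l (𝓝 0) := by
      have h2 : Continuous fun Δ : ℝ => ENNReal.ofReal (C * |Δ|) ^ p :=
        ENNReal.continuous_rpow_const.comp (ENNReal.continuous_ofReal.comp (by fun_prop))
      have h3 := h2.tendsto 0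
      simp only [abs_zero, mul_zero, ENNReal.ofReal_zero, ENNReal.zero_rpow_of_pos hp] at h3
      exact h3.mono_left nhdsWithin_le_nhds
    refine tendsto_of_tendsto_of_tendsto_of_le_of_le' tendsto_const_nhds h1
      (Eventually.of_forall fun _ => zero_le) ?_
    filter_upwards [hball] with Δ hΔ
    have h4 := lintegral_rpow_le_of_pMoment_le hp (hg _ hΔ _ hu0)
    simpa only [ofReal_norm, add_sub_cancel_left] using h4
  have hWsmall := small hpW0 gW hWlipu
  have hZsmall := small hpZ0 gZ hZlipu
  have hEsmall : Tendsto (fun Δ => ∫⁻ ω, ‖E Δ ω - gdW ω‖ₑ ^ αW ∂P) l (𝓝 0) := by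
    have h1 := (ENNReal.continuous_rpow_const (y := αW)).tendsto 0 |>.comp (hdW 0)
    rw [ENNReal.zero_rpow_of_pos hαW0] at h1
    refine h1.congr' ?_
    filter_upwards [hne] with Δ hΔ
    have h2 := pMoment_div (P := P) hαW0 hΔ (fun ω => gW (u + Δ) ω - gW u ω) gdW
    simp only [Function.comp, Function.iterate_zero, id]
    rw [h2, one_div, ENNReal.rpow_inv_rpow hαW0.ne']
    rfl
  -- uniform integrability of the driving quantities
  have hUIa : EventuallyUI P l fun Δ ω => a Δ ω ^ pW := by
    have hc : EventuallyUI P l fun _ ω => (2 * ‖gW u ω‖ₑ + 1) ^ pW := by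
      refine EventuallyUI.of_const (by have := hgWmeas u; fun_prop) ?_
      have h1 : ∫⁻ ω, ‖gW u ω‖ₑ ^ pW ∂P ≠ ⊤ := by
        have h2 := hWmom u hu0
        simp only [ofReal_norm] at h2
        exact ne_top_of_le_ne_top ENNReal.ofReal_ne_top h2
      refine ne_top_of_le_ne_top (b := ∫⁻ ω, 2 ^ pW * (2 ^ pW * ‖gW u ω‖ₑ ^ pW + 1) ∂P) ?_
        (lintegral_mono fun ω => ?_)
      · have h2 : (2 : ℝ≥0∞) ^ pW ≠ ⊤ := ENNReal.rpow_ne_top_of_nonneg hpW0.le (by simp)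
        rw [lintegral_const_mul' _ _ h2, lintegral_add_right _ measurable_const,
          lintegral_const_mul' _ _ h2]
        refine ENNReal.mul_ne_top h2 (ENNReal.add_ne_top.2 ⟨ENNReal.mul_ne_top h2 h1, by simp⟩)
      · refine (add_rpow_le_two_rpow_mul hpW0.le _ _).trans ?_
        rw [ENNReal.mul_rpow_of_nonneg _ _ hpW0.le, ENNReal.one_rpow]
    refine ((hc.add (EventuallyUI.of_tendsto hWsmall) (fun _ => by
      have := hgWmeas u; fun_prop)).const_mul
        (K := 2 ^ pW) (ENNReal.rpow_ne_top_of_nonneg hpW0.le (by simp))).mono ?_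
    refine Eventually.of_forall fun Δ => ae_of_all _ fun ω => ?_
    refine le_trans (ENNReal.rpow_le_rpow ?_ hpW0.le) (add_rpow_le_two_rpow_mul hpW0.le _ _)
    simp only [ha, growth]
    rw [ENNReal.ofReal_add (by positivity) (by positivity),
      ENNReal.ofReal_add (by positivity) (by positivity), ENNReal.ofReal_mul (by simp),
      ofReal_norm, ofReal_norm, add_comm (ENNReal.ofReal 1)]
    simp
  have hUIE : EventuallyUI P l fun Δ ω => ‖E Δ ω‖ₑ ^ αW := by
    have hc : EventuallyUI P l fun _ ω => ‖gdW ω‖ₑ ^ αW := by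
      refine EventuallyUI.of_const (by fun_prop) ?_
      simpa only [ofReal_norm] using hdWmom.ne
    refine ((hc.add (EventuallyUI.of_tendsto hEsmall) (fun _ => by fun_prop)).const_mul
        (K := 2 ^ αW) (ENNReal.rpow_ne_top_of_nonneg hαW0.le (by simp))).mono ?_
    refine Eventually.of_forall fun Δ => ae_of_all _ fun ω => ?_
    refine le_trans (ENNReal.rpow_le_rpow ?_ hαW0.le) (add_rpow_le_two_rpow_mul hαW0.le _ _)
    calc ‖E Δ ω‖ₑ = ‖gdW ω + (E Δ ω - gdW ω)‖ₑ := by rw [add_sub_cancel]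
      _ ≤ _ := enorm_add_le _ _
  have hsplit : ∀ x y : ℝ≥0∞, (x ^ rW * y) ^ α = (x ^ pW) ^ (rW * α / pW) * (y ^ αW) ^ (α / αW) := by
    intro x y
    rw [ENNReal.mul_rpow_of_nonneg _ _ hα.le, ← ENNReal.rpow_mul, ← ENNReal.rpow_mul,
      ← ENNReal.rpow_mul, mul_div_cancel₀ _ hpW0.ne', mul_div_cancel₀ _ hαW0.ne']
  have hUIψ : EventuallyUI P l fun Δ ω => (a Δ ω ^ rW * ‖E Δ ω‖ₑ) ^ α := by
    refine (hUIa.add hUIE fun Δ => (ham Δ).pow_const _).mono ?_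
    refine Eventually.of_forall fun Δ => ae_of_all _ fun ω => ?_
    rw [hsplit]
    exact rpow_mul_rpow_le_add hs0 ht0.le hst _ _
  obtain ⟨b, K, hb, hK, hbK⟩ := rpow_contraction hα hβ
  -- the recursion for the difference quotients
  have hDrec : ∀ᶠ Δ in l, ∀ᵐ ω ∂P, D Δ (T ω) =
      Δ⁻¹ • (G (gW (u + Δ) ω, gZ (u + Δ) ω) - G (gW u ω, gZ u ω)) := by
    filter_upwards [hball] with Δ hΔ
    filter_upwards [hrec 0 _ hΔ, hrec 0 _ hu0] with ω h1 h2
    simp only [zero_add, Function.iterate_one, Function.iterate_zero, id] at h1 h2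
    simp only [hD, diffQuot, h1, h2]
  have hUID : EventuallyUI P l fun Δ ω => ‖D Δ ω‖ₑ ^ α := by
    refine EventuallyUI.of_contraction hT
      (F' := fun Δ ω => K * (ENNReal.ofReal (3 * C) ^ α * (a Δ ω ^ rW * ‖E Δ ω‖ₑ) ^ α))
      ((hUIψ.const_mul (ENNReal.rpow_ne_top_of_nonneg hα.le ENNReal.ofReal_ne_top)).const_mul hK)
      (fun Δ => by have := hDm Δ; fun_prop)
      (fun Δ ω => ENNReal.rpow_ne_top_of_nonneg hα.le enorm_ne_top) hb ?_
    filter_upwards [hDrec] with Δ hΔ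
    filter_upwards [hΔ] with ω hω
    rw [← ENNReal.mul_rpow_of_nonneg _ _ hα.le]
    refine hbK _ _ _ ?_
    rw [hω]
    exact enorm_increment_le hC hβ0.le hrW hGlip _ _ _ _ _
  -- `Q` dominates the linearisation error `R` below, and `Q ^ α` is uniformly integrable
  set Q : ℝ → Ω → ℝ≥0∞ := fun Δ ω =>
    2 * ‖D Δ ω‖ₑ + (2 * ENNReal.ofReal (3 * C) + 1) * (a Δ ω ^ rW * ‖E Δ ω‖ₑ) with hQ
  have hUIS : EventuallyUI P l fun Δ ω => Q Δ ω ^ α := by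
    have h2 : (2 : ℝ≥0∞) ^ α ≠ ⊤ := ENNReal.rpow_ne_top_of_nonneg hα.le (by simp)
    have h3 : (2 * ENNReal.ofReal (3 * C) + 1) ^ α ≠ ⊤ :=
      ENNReal.rpow_ne_top_of_nonneg hα.le (by finiteness)
    refine (((hUID.const_mul h2).add (hUIψ.const_mul h3) (fun Δ => by
      have := hDm Δ; fun_prop)).const_mul h2).mono ?_
    refine Eventually.of_forall fun Δ => ae_of_all _ fun ω => ?_
    rw [← ENNReal.mul_rpow_of_nonneg _ _ hα.le, ← ENNReal.mul_rpow_of_nonneg _ _ hα.le]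
    exact add_rpow_le_two_rpow_mul hα.le _ _
  set R : ℝ → Ω → (Fin dZ → ℝ) := fun Δ ω =>
    D Δ (T ω) - fderiv ℝ G (gW u ω, gZ u ω) (E Δ ω, D Δ ω) with hR
  have hfdm : ∀ {e : Ω → (Fin dW → ℝ)} {d : Ω → (Fin dZ → ℝ)}, Measurable e → Measurable d →
      Measurable fun ω => fderiv ℝ G (gW u ω, gZ u ω) (e ω, d ω) := fun he hd =>
    (hGdiff.continuous_fderiv_apply one_ne_zero).measurable.comp
      (((hgWmeas u).prodMk (hgZmeas u)).prodMk (he.prodMk hd))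
  have hRm : ∀ Δ, Measurable (R Δ) := fun Δ =>
    ((hDm Δ).comp hT.measurable).sub (hfdm (hEm Δ) (hDm Δ))
  set η : ℝ → Ω → ℝ≥0∞ := fun Δ ω =>
    min 1 (ENNReal.ofReal (relRem G (gW u ω, gZ u ω) (gW (u + Δ) ω, gZ (u + Δ) ω)) ^ α) with hη
  have hηm : ∀ Δ, Measurable (η Δ) := fun Δ => by
    have := measurable_relRem hGdiff ((hgWmeas u).prodMk (hgZmeas u))
      ((hgWmeas (u + Δ)).prodMk (hgZmeas (u + Δ)))
    fun_prop
  have hRle : ∀ᶠ Δ in l, ∀ᵐ ω ∂P, ‖R Δ ω‖ₑ ^ α ≤ η Δ ω * Q Δ ω ^ α := by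
    filter_upwards [hDrec] with Δ hΔ
    filter_upwards [hΔ] with ω hω
    have hQ1 : ‖R Δ ω‖ₑ ≤ Q Δ ω := by
      have e1 := enorm_increment_le hC hβ0.le hrW hGlip (gW u ω) (gW (u + Δ) ω)
        (gZ u ω) (gZ (u + Δ) ω) Δ
      rw [← hω] at e1
      have e2 := enorm_partialZ_le hβ0.le hGz (gW u ω) (gZ u ω) (D Δ ω)
      have e3 := enorm_partialW_le hC hrW hGw (gW u ω) (gW (u + Δ) ω) (E Δ ω) (gZ u ω)
      have hβ1' : ENNReal.ofReal β ≤ 1 := by simpa using hβ1.le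
      calc ‖R Δ ω‖ₑ ≤ ‖D Δ (T ω)‖ₑ + (‖partialZ G (gW u ω) (gZ u ω) (D Δ ω)‖ₑ +
            ‖partialW G (gW u ω) (gZ u ω) (E Δ ω)‖ₑ) := by
            simp only [hR]
            rw [← partial_add]
            exact enorm_sub_le.trans (by gcongr; exact enorm_add_le _ _)
        _ ≤ (1 * ‖D Δ ω‖ₑ + ENNReal.ofReal (3 * C) * (a Δ ω ^ rW * ‖E Δ ω‖ₑ)) +
            (1 * ‖D Δ ω‖ₑ + ENNReal.ofReal (3 * C) * (a Δ ω ^ rW * ‖E Δ ω‖ₑ)) := by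
            gcongr
            · exact e1.trans (by gcongr <;> exact le_rfl)
            · exact e2.trans (by gcongr)
        _ = 2 * ‖D Δ ω‖ₑ + 2 * ENNReal.ofReal (3 * C) * (a Δ ω ^ rW * ‖E Δ ω‖ₑ) := by ring
        _ ≤ Q Δ ω := by
            simp only [hQ]
            gcongr
            exact le_self_add
    have hQ2 : ‖R Δ ω‖ₑ ≤
        ENNReal.ofReal (relRem G (gW u ω, gZ u ω) (gW (u + Δ) ω, gZ (u + Δ) ω)) * Q Δ ω := by
      have e1 := enorm_rem_le (G := G) (gW u ω) (gW (u + Δ) ω) (gZ u ω) (gZ (u + Δ) ω) Δ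
      rw [← hω] at e1
      refine e1.trans ?_
      gcongr
      simp only [hQ]
      have e2 : 1 ≤ a Δ ω ^ rW := one_le_growth_rpow hrW _ _
      refine add_le_add ?_ ?_
      · exact le_mul_of_one_le_left zero_le one_le_two
      · exact (le_mul_of_one_le_left zero_le e2).trans
          (le_mul_of_one_le_left zero_le le_add_self)
    simp only [hη]
    rcases le_total 1 (ENNReal.ofReal
      (relRem G (gW u ω, gZ u ω) (gW (u + Δ) ω, gZ (u + Δ) ω)) ^ α) with h | h
    · rw [min_eq_left h, one_mul]
      exact ENNReal.rpow_le_rpow hQ1 hα.le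
    · rw [min_eq_right h, ← ENNReal.mul_rpow_of_nonneg _ _ hα.le]
      exact ENNReal.rpow_le_rpow hQ2 hα.le
  have hRsmall : Tendsto (fun Δ => ∫⁻ ω, ‖R Δ ω‖ₑ ^ α ∂P) l (𝓝 0) := by
    refine tendsto_of_subseq_tendsto fun ns hns => ?_
    obtain ⟨φ, hφ, hφ0⟩ := exists_subseq_ae_tendsto_zero (P := P)
      (f := fun n ω => ‖gW (u + ns n) ω - gW u ω‖ₑ ^ pW +
        ‖gZ (u + ns n) ω - gZ u ω‖ₑ ^ (pW / (rW + 1)))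
      (fun n => by
        have h1 := hgWmeas u; have h2 := hgWmeas (u + ns n)
        have h3 := hgZmeas u; have h4 := hgZmeas (u + ns n)
        fun_prop)
      (by
        have h1 := (hWsmall.comp hns).add (hZsmall.comp hns)
        rw [add_zero] at h1
        refine h1.congr fun n => ?_
        have h1 := hgWmeas u; have h2 := hgWmeas (u + ns n)
        exact (lintegral_add_left (by fun_prop) _).symm)
    refine ⟨φ, ?_⟩
    have hsφ : Tendsto (fun n => ns (φ n)) atTop l := hns.comp hφ.tendsto_atTop
    have h1 := hUIS.tendsto_mul hsφ (η := fun n => η (ns (φ n))) (fun n => hηm _)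
      (fun n ω => min_le_left _ _) (by
        filter_upwards [hφ0] with ω hω
        have hw : Tendsto (fun n => gW (u + ns (φ n)) ω - gW u ω) atTop (𝓝 0) :=
          tendsto_zero_of_enorm_rpow hpW0 (tendsto_of_tendsto_of_tendsto_of_le_of_le
            tendsto_const_nhds hω (fun _ => zero_le) (fun _ => le_self_add))
        have hz : Tendsto (fun n => gZ (u + ns (φ n)) ω - gZ u ω) atTop (𝓝 0) :=
          tendsto_zero_of_enorm_rpow hpZ0 (tendsto_of_tendsto_of_tendsto_of_le_of_le
            tendsto_const_nhds hω (fun _ => zero_le) (fun _ => le_add_self))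
        have hx : Tendsto (fun n => (gW (u + ns (φ n)) ω, gZ (u + ns (φ n)) ω)) atTop
            (𝓝 (gW u ω, gZ u ω)) :=
          (tendsto_sub_nhds_zero_iff.1 hw).prodMk_nhds (tendsto_sub_nhds_zero_iff.1 hz)
        have hd := (hGdiff.differentiable one_ne_zero (gW u ω, gZ u ω)).hasFDerivAt
        have h2 := (hasFDerivAt_iff_tendsto.1 hd).comp hx
        have h3 := (ENNReal.continuous_rpow_const (y := α)).tendsto _ |>.comp
          (ENNReal.tendsto_ofReal h2)
        rw [ENNReal.ofReal_zero, ENNReal.zero_rpow_of_pos hα] at h3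
        exact tendsto_of_tendsto_of_tendsto_of_le_of_le tendsto_const_nhds h3
          (fun _ => zero_le) (fun _ => min_le_right _ _))
    refine tendsto_of_tendsto_of_tendsto_of_le_of_le' tendsto_const_nhds h1
      (Eventually.of_forall fun _ => zero_le) ?_
    filter_upwards [hsφ.eventually hRle] with n hn
    exact lintegral_mono_ae hn
  -- the error in `L^{α_W}` of the derivative of `W*`, amplified by `∂_w G`, is small by Hölder
  have hHolder : Tendsto (fun Δ => ∫⁻ ω, (a Δ ω ^ rW * ‖E Δ ω - gdW ω‖ₑ) ^ α ∂P) l (𝓝 0) := by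
    obtain ⟨M, hM, hMa⟩ := hUIa.eventually_lintegral_le
    have h1 : Tendsto (fun Δ => M ^ (rW * α / pW) *
        (∫⁻ ω, ‖E Δ ω - gdW ω‖ₑ ^ αW ∂P) ^ (α / αW)) l (𝓝 0) := by
      have h2 := (ENNReal.continuous_rpow_const (y := α / αW)).tendsto 0 |>.comp hEsmall
      rw [ENNReal.zero_rpow_of_pos ht0] at h2
      have h3 := ENNReal.Tendsto.const_mul (a := M ^ (rW * α / pW)) h2
        (Or.inr (ENNReal.rpow_ne_top_of_nonneg hs0 hM))
      rwa [mul_zero] at h3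
    refine tendsto_of_tendsto_of_tendsto_of_le_of_le' tendsto_const_nhds h1
      (Eventually.of_forall fun _ => zero_le) ?_
    filter_upwards [hMa] with Δ hΔ
    simp only [hsplit]
    refine (ENNReal.lintegral_mul_norm_pow_le ((ham Δ).pow_const _).aemeasurable
      (by have := hEm Δ; fun_prop) hs0 ht0.le hst).trans ?_
    gcongr
  -- the defect of `D Δ` in the linearised recursion
  set ρ : ℝ → Ω → ℝ≥0∞ := fun Δ ω =>
    ‖D Δ (T ω) - fderiv ℝ G (gW u ω, gZ u ω) (gdW ω, D Δ ω)‖ₑ with hρ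
  have hρm : ∀ Δ, Measurable (ρ Δ) := fun Δ =>
    (((hDm Δ).comp hT.measurable).sub (hfdm hgdWmeas (hDm Δ))).enorm
  have hρsmall : Tendsto (fun Δ => ∫⁻ ω, ρ Δ ω ^ α ∂P) l (𝓝 0) := by
    have h2 : (2 : ℝ≥0∞) ^ α ≠ ⊤ := ENNReal.rpow_ne_top_of_nonneg hα.le (by simp)
    have h3 : ENNReal.ofReal (3 * C) ^ α ≠ ⊤ :=
      ENNReal.rpow_ne_top_of_nonneg hα.le ENNReal.ofReal_ne_top
    have h1 := ENNReal.Tendsto.const_mul (a := 2 ^ α) (hRsmall.add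
      (ENNReal.Tendsto.const_mul (a := ENNReal.ofReal (3 * C) ^ α) hHolder (Or.inr h3)))
      (Or.inr h2)
    rw [mul_zero, add_zero, mul_zero] at h1
    refine tendsto_of_tendsto_of_tendsto_of_le_of_le tendsto_const_nhds h1
      (fun _ => zero_le) fun Δ => ?_
    dsimp only
    rw [← lintegral_const_mul' _ _ h3, ← lintegral_add_left (by have := hRm Δ; fun_prop),
      ← lintegral_const_mul' _ _ h2]
    refine lintegral_mono fun ω => ?_
    rw [← ENNReal.mul_rpow_of_nonneg _ _ hα.le]
    refine le_trans (ENNReal.rpow_le_rpow ?_ hα.le) (add_rpow_le_two_rpow_mul hα.le _ _)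
    have e1 : D Δ (T ω) - fderiv ℝ G (gW u ω, gZ u ω) (gdW ω, D Δ ω) =
        R Δ ω + partialW G (gW u ω) (gZ u ω) (E Δ ω - gdW ω) := by
      simp only [hR, ← partial_add, map_sub]
      abel
    simp only [hρ]
    rw [e1]
    refine (enorm_add_le _ _).trans ?_
    gcongr
    exact enorm_partialW_le hC hrW hGw _ _ _ _
  have hCauchy : Tendsto (fun p : ℝ × ℝ => ∫⁻ ω, ‖D p.1 ω - D p.2 ω‖ₑ ^ α ∂P)
      (l ×ˢ l) (𝓝 0) := by
    have h2 : (2 : ℝ≥0∞) ^ α ≠ ⊤ := ENNReal.rpow_ne_top_of_nonneg hα.le (by simp)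
    have hb0 : (1 - b)⁻¹ ≠ ⊤ := ENNReal.inv_ne_top.2 (tsub_pos_of_lt hb).ne'
    have h1 := ENNReal.Tendsto.const_mul (a := (1 - b)⁻¹) (ENNReal.Tendsto.const_mul (a := K)
      (ENNReal.Tendsto.const_mul (a := 2 ^ α)
        ((hρsmall.comp (tendsto_fst (g := l))).add (hρsmall.comp (tendsto_snd (f := l))))
      (Or.inr h2)) (Or.inr hK)) (Or.inr hb0)
    rw [add_zero, mul_zero, mul_zero, mul_zero] at h1
    refine tendsto_of_tendsto_of_tendsto_of_le_of_le tendsto_const_nhds h1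
      (fun _ => zero_le) fun p => ?_
    obtain ⟨Δ, Δ'⟩ := p
    simp only [Function.comp]
    rw [← lintegral_add_left ((hρm Δ).pow_const _), ← lintegral_const_mul' _ _ h2,
      ← lintegral_const_mul' _ _ hK]
    refine lintegral_le_of_contraction hT (by have := hDm Δ; have := hDm Δ'; fun_prop)
      (fun ω => ENNReal.rpow_ne_top_of_nonneg hα.le enorm_ne_top) hb (ae_of_all _ fun ω => ?_)
    have e1 : D Δ (T ω) - D Δ' (T ω) = partialZ G (gW u ω) (gZ u ω) (D Δ ω - D Δ' ω) +
        ((D Δ (T ω) - fderiv ℝ G (gW u ω, gZ u ω) (gdW ω, D Δ ω)) -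
          (D Δ' (T ω) - fderiv ℝ G (gW u ω, gZ u ω) (gdW ω, D Δ' ω))) := by
      simp only [← partial_add, map_sub]
      abel
    refine (hbK _ ‖D Δ ω - D Δ' ω‖ₑ (ρ Δ ω + ρ Δ' ω) ?_).trans ?_
    · rw [e1]
      refine (enorm_add_le _ _).trans (add_le_add (enorm_partialZ_le hβ0.le hGz _ _ _) ?_)
      exact enorm_sub_le
    · gcongr
      exact add_rpow_le_two_rpow_mul hα.le _ _
  -- a sequence `Δ_n → 0` along which the difference quotients of `W*` converge a.e.
  obtain ⟨s₀, hs₀⟩ := exists_seq_tendsto l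
  obtain ⟨φ₀, hφ₀, hEae⟩ := exists_subseq_ae_tendsto_zero (P := P)
    (f := fun n ω => ‖E (s₀ n) ω - gdW ω‖ₑ ^ αW)
    (fun n => by have := hEm (s₀ n); fun_prop) (hEsmall.comp hs₀)
  have hs₁ : Tendsto (fun n => s₀ (φ₀ n)) atTop l := hs₀.comp hφ₀.tendsto_atTop
  obtain ⟨φ, g, hφ, hg, hgae, hglim⟩ := exists_limit_of_cauchy hα hDm hCauchy hs₁
  have hs₂ : Tendsto (fun n => s₀ (φ₀ (φ n))) atTop l := hs₁.comp hφ.tendsto_atTop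
  have hs₂0 : Tendsto (fun n => s₀ (φ₀ (φ n))) atTop (𝓝 0) := hs₂.mono_right nhdsWithin_le_nhds
  have hrec_ev : ∀ᵐ ω ∂P, ∀ᶠ n in atTop, D (s₀ (φ₀ (φ n))) (T ω) =
      (s₀ (φ₀ (φ n)))⁻¹ • (G (gW (u + s₀ (φ₀ (φ n))) ω, gZ (u + s₀ (φ₀ (φ n))) ω) -
        G (gW u ω, gZ u ω)) := by
    obtain ⟨N, hN⟩ := eventually_atTop.1 (hs₂.eventually hDrec)
    have h1 : ∀ᵐ ω ∂P, ∀ n, N ≤ n → D (s₀ (φ₀ (φ n))) (T ω) =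
      (s₀ (φ₀ (φ n)))⁻¹ • (G (gW (u + s₀ (φ₀ (φ n))) ω, gZ (u + s₀ (φ₀ (φ n))) ω) -
        G (gW u ω, gZ u ω)) := by
      rw [ae_all_iff]
      intro n
      by_cases hn : N ≤ n
      · filter_upwards [hN n hn] with ω hω _ using hω
      · exact ae_of_all _ fun ω h => absurd h hn
    filter_upwards [h1] with ω hω
    exact eventually_atTop.2 ⟨N, hω⟩
  have hgrec : ∀ᵐ ω ∂P, g (T ω) = partialZ G (gW u ω) (gZ u ω) (g ω) +
      partialW G (gW u ω) (gZ u ω) (gdW ω) := by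
    filter_upwards [hgae, hT.quasiMeasurePreserving.ae hgae, hEae, hrec_ev] with ω h1 h2 h3 h4
    have hE0 : Tendsto (fun n => E (s₀ (φ₀ (φ n))) ω) atTop (𝓝 (gdW ω)) :=
      (tendsto_sub_nhds_zero_iff.1 (tendsto_zero_of_enorm_rpow hαW0 h3)).comp hφ.tendsto_atTop
    have hED : Tendsto (fun n => (E (s₀ (φ₀ (φ n))) ω, D (s₀ (φ₀ (φ n))) ω)) atTop
        (𝓝 (gdW ω, g ω)) := hE0.prodMk_nhds h1
    have hev : ∀ᶠ n in atTop, s₀ (φ₀ (φ n)) ≠ 0 := hs₂.eventually hne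
    have hd0 : Tendsto (fun n => s₀ (φ₀ (φ n)) • (E (s₀ (φ₀ (φ n))) ω, D (s₀ (φ₀ (φ n))) ω))
        atTop (𝓝 0) := by
      have := hs₂0.smul hED
      rwa [zero_smul] at this
    have hd := (hGdiff.differentiable one_ne_zero (gW u ω, gZ u ω)).hasFDerivAt
    have hlim := (hasFDerivWithinAt_univ.2 hd).lim (c := fun n => (s₀ (φ₀ (φ n)))⁻¹) hd0
      (Eventually.of_forall fun _ => Set.mem_univ _) (hED.congr' (by
        filter_upwards [hev] with n hn
        rw [inv_smul_smul₀ hn]))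
    rw [partial_add]
    refine tendsto_nhds_unique h2 (hlim.congr' ?_)
    filter_upwards [hev, h4] with n hn hn4
    rw [hn4]
    have hW : gW u ω + s₀ (φ₀ (φ n)) • E (s₀ (φ₀ (φ n))) ω = gW (u + s₀ (φ₀ (φ n))) ω := by
      simp only [hE, diffQuot]
      rw [smul_inv_smul₀ hn, add_sub_cancel]
    have hZ : gZ u ω + s₀ (φ₀ (φ n)) • D (s₀ (φ₀ (φ n))) ω = gZ (u + s₀ (φ₀ (φ n))) ω := by
      simp only [hD, diffQuot]
      rw [smul_inv_smul₀ hn, add_sub_cancel]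
    rw [Prod.smul_mk, Prod.mk_add_mk, hW, hZ]
  refine ⟨g, hg, ?_, ?_, ?_⟩
  · intro t
    filter_upwards [(hT.iterate t).quasiMeasurePreserving.ae hgrec] with ω hω
    rw [Function.iterate_succ_apply']
    exact hω
  · simp only [ofReal_norm]
    obtain ⟨M, hM, hMD⟩ := hUID.eventually_lintegral_le
    obtain ⟨Δ, h1, h2⟩ := (hMD.and (ENNReal.tendsto_nhds_zero.1 hglim 1 one_pos)).exists
    have h3 : (2 : ℝ≥0∞) ^ α ≠ ⊤ := ENNReal.rpow_ne_top_of_nonneg hα.le (by simp)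
    calc ∫⁻ ω, ‖g ω‖ₑ ^ α ∂P
        ≤ ∫⁻ ω, 2 ^ α * (‖D Δ ω‖ₑ ^ α + ‖D Δ ω - g ω‖ₑ ^ α) ∂P := by
          refine lintegral_mono fun ω => ?_
          refine le_trans (ENNReal.rpow_le_rpow ?_ hα.le) (add_rpow_le_two_rpow_mul hα.le _ _)
          calc ‖g ω‖ₑ = ‖D Δ ω - (D Δ ω - g ω)‖ₑ := by rw [sub_sub_cancel]
            _ ≤ _ := enorm_sub_le
      _ = 2 ^ α * (∫⁻ ω, ‖D Δ ω‖ₑ ^ α ∂P + ∫⁻ ω, ‖D Δ ω - g ω‖ₑ ^ α ∂P) := by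
          rw [lintegral_const_mul' _ _ h3,
            lintegral_add_left (by have := hDm Δ; fun_prop)]
      _ ≤ 2 ^ α * (M + 1) := by gcongr
      _ < ⊤ := (ENNReal.mul_ne_top h3 (by simp [hM])).lt_top
  · intro t
    have h1 := (ENNReal.continuous_rpow_const (y := 1 / α)).tendsto 0 |>.comp hglim
    rw [ENNReal.zero_rpow_of_pos (by positivity)] at h1
    refine h1.congr' ?_
    filter_upwards [hne] with Δ hΔ
    have h2 := pMoment_div (P := P) hα hΔ
      (fun ω => gZ (u + Δ) (T^[t] ω) - gZ u (T^[t] ω)) (fun ω => g (T^[t] ω))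
    rw [h2, Function.comp]
    congr 1
    have h3 : Measurable fun ω => ‖D Δ ω - g ω‖ₑ ^ α := by have := hDm Δ; fun_prop
    exact ((hT.iterate t).lintegral_comp h3).symm
end
end

section
/- Let (Ω, 𝒜, μ) be a probability space, T:Ω→Ω an ergodic measure-preserving transformation, and f ∈ L¹(μ) with ∫f dμ = 0. Set W_t := f∘T^t. Let L:ℝ→ℝ be Lipschitz with compact support and fix u ∈ (0,1). Then for any bandwidth sequence b_n → 0 with n·b_n → ∞, (1/n)Σ_{t=1}^n L_{b_n}(t/n − u) W_t → 0 in probability as n → ∞. -/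
/-!
The convergence is proved in `L¹`, which implies convergence in probability, and only the mean
ergodic theorem is needed instead of the pointwise one. With `s = n * b n` the weights are
`w t = L ((t - n * u) / s) / s`. Their `ℓ¹` norm stays bounded, so the kernel averages are uniformly
bounded operators on `L¹`; their total variation is `O(1 / s) → 0`, so by summation by parts the
averages of a coboundary `g - g ∘ T` tend to `0` in `L¹` (`kernel_weight_bounds`,
`integral_abs_weighted_le_coboundary`). By ergodicity coboundaries are dense among the centered
integrable functions (`l1_coboundary_dense`), and the result follows by approximation.
-/

open MeasureTheory ProbabilityTheory Filter
open scoped ENNReal NNReal Topology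

noncomputable section

/-- Summation by parts. -/
lemma sum_mul_sub_succ (w x : ℕ → ℝ) (n : ℕ) :
    ∑ t ∈ Finset.Icc 1 n, w t * (x t - x (t + 1)) =
      w 1 * x 1 - w (n + 1) * x (n + 1)
        + ∑ t ∈ Finset.Icc 1 n, (w (t + 1) - w t) * x (t + 1) := by
  induction n with
  | zero => simp
  | succ n ih =>
    rw [Finset.sum_Icc_succ_top (by omega), Finset.sum_Icc_succ_top (by omega), ih]
    ring

lemma card_near_le (s : Finset ℕ) (x r : ℝ) (hr : 0 ≤ r) (hs : ∀ t ∈ s, |(t : ℝ) - x| ≤ r) :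
    (s.card : ℝ) ≤ 2 * r + 1 := by
  have h1 : s.card ≤ (Finset.Icc ⌈x - r⌉ ⌊x + r⌋).card := by
    refine Finset.card_le_card_of_injOn (fun t : ℕ => (t : ℤ)) ?_ (by intro a _ b _ h; simpa using h)
    intro t ht
    have := abs_le.1 (hs t ht)
    simp only [Finset.coe_Icc, Set.mem_Icc, Int.ceil_le, Int.le_floor, Int.cast_natCast]
    constructor <;> linarith
  rw [Int.card_Icc] at h1
  have h2 : (s.card : ℝ) ≤ ((⌊x + r⌋ + 1 - ⌈x - r⌉).toNat : ℝ) := by exact_mod_cast h1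
  refine h2.trans ?_
  rcases le_total 0 (⌊x + r⌋ + 1 - ⌈x - r⌉) with h | h
  · have h3 : ((⌊x + r⌋ + 1 - ⌈x - r⌉).toNat : ℝ) = ((⌊x + r⌋ + 1 - ⌈x - r⌉ : ℤ) : ℝ) := by
      exact_mod_cast congrArg (Int.cast : ℤ → ℝ) (Int.toNat_of_nonneg h)
    rw [h3]
    push_cast
    linarith [Int.floor_le (x + r), Int.le_ceil (x - r)]
  · rw [Int.toNat_of_nonpos h]
    simp; linarith

/-- A bounded sequence vanishing at the indices farther than `r` from `x` has at most `2 * r + 1`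
nonzero terms, each at most `m`. -/
lemma sum_abs_le_of_near (s : Finset ℕ) (a : ℕ → ℝ) (x r m : ℝ) (hr : 0 ≤ r) (hm : 0 ≤ m)
    (ha : ∀ t ∈ s, |a t| ≤ m) (ha0 : ∀ t ∈ s, r < |(t : ℝ) - x| → a t = 0) :
    ∑ t ∈ s, |a t| ≤ (2 * r + 1) * m := by
  classical
  have h1 : ∑ t ∈ s, |a t| = ∑ t ∈ s.filter (fun t : ℕ => |(t : ℝ) - x| ≤ r), |a t| := by
    symm
    refine Finset.sum_subset (Finset.filter_subset _ _) fun t ht ht' => ?_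
    simp only [Finset.mem_filter, not_and, not_le] at ht'
    rw [ha0 t ht (ht' ht), abs_zero]
  rw [h1]
  refine (Finset.sum_le_card_nsmul _ _ m fun t ht => ha t (Finset.mem_filter.1 ht).1).trans ?_
  rw [nsmul_eq_mul]
  gcongr
  exact card_near_le _ x r hr fun t ht => (Finset.mem_filter.1 ht).2

/-- For ergodic `T`, coboundaries `g - g ∘ T` are `L²`-dense among centered functions: a vector
orthogonal to all coboundaries is invariant, hence constant. -/
lemma l2_coboundary_dense {Ω : Type*} [MeasurableSpace Ω] (P : Measure Ω) [IsProbabilityMeasure P]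
    (T : Ω → Ω) (hT : Ergodic T P) (h : Lp ℝ 2 P) (h0 : ∫ ω, h ω ∂P = 0) (ε : ℝ) (hε : 0 < ε) :
    ∃ g : Lp ℝ 2 P, ‖h - (g - Lp.compMeasurePreserving T hT.toMeasurePreserving g)‖ < ε := by
  let U : Lp ℝ 2 P →ₗᵢ[ℝ] Lp ℝ 2 P := Lp.compMeasurePreservingₗᵢ ℝ T hT.toMeasurePreserving
  let D : Lp ℝ 2 P →ₗ[ℝ] Lp ℝ 2 P := LinearMap.id - U.toLinearMap
  have key : h ∈ (LinearMap.range D).topologicalClosure := by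
    rw [← Submodule.orthogonal_orthogonal_eq_closure, Submodule.mem_orthogonal]
    intro x hx
    -- A vector orthogonal to all `g - U g` is `U`-invariant since `U` is an isometry.
    have hfix : U x = x := by
      have hxx : ∀ y, inner ℝ (U y) x = inner ℝ y x := by
        intro y
        have := (Submodule.mem_orthogonal _ _).1 hx (D y) ⟨y, rfl⟩
        simp only [D, LinearMap.sub_apply, LinearMap.id_apply, inner_sub_left] at this
        linarith! [this]
      refine eq_of_norm_le_re_inner_eq_norm_sq (𝕜 := ℝ) (U.norm_map x).le ?_
      simp [hxx]
    have hinv : (x : Ω → ℝ) ∘ T =ᵐ[P] x := by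
      have := Lp.coeFn_compMeasurePreserving x hT.toMeasurePreserving
      have h2 : Lp.compMeasurePreserving T hT.toMeasurePreserving x = x := hfix
      rw [h2] at this
      exact this.symm
    obtain ⟨c, hc⟩ := hT.quasiErgodic.ae_eq_const_of_ae_eq_comp_ae
      (Lp.aestronglyMeasurable x) hinv
    rw [L2.inner_def]
    have : ∫ a, inner ℝ (x a) (h a) ∂P = ∫ a, c * h a ∂P := by
      refine integral_congr_ae ?_
      filter_upwards [hc] with a ha
      simp [ha, mul_comm]
    rw [this, integral_const_mul, h0, mul_zero]
  have key2 : h ∈ closure (LinearMap.range D : Set (Lp ℝ 2 P)) := key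
  obtain ⟨_, ⟨g, rfl⟩, hg⟩ := Metric.mem_closure_iff.1 key2 ε hε
  exact ⟨g, by rw [dist_eq_norm] at hg; exact hg⟩

/-- `L¹` version of the density of coboundaries, by approximating `f` with a simple function,
recentering it, and using `‖·‖₁ ≤ ‖·‖₂` on a probability space. -/
lemma l1_coboundary_dense {Ω : Type*} [MeasurableSpace Ω] (P : Measure Ω) [IsProbabilityMeasure P]
    (T : Ω → Ω) (hT : Ergodic T P) (f : Ω → ℝ) (hf : Integrable f P) (hf0 : ∫ ω, f ω ∂P = 0)
    (ε : ℝ) (hε : 0 < ε) :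
    ∃ g : Ω → ℝ, Integrable g P ∧ ∫ ω, |f ω - (g ω - g (T ω))| ∂P ≤ ε := by
  have hε3 : ENNReal.ofReal (ε / 3) ≠ 0 := by simpa using hε
  obtain ⟨s, hs, -⟩ := (memLp_one_iff_integrable.2 hf).exists_simpleFunc_eLpNorm_sub_lt
    ENNReal.one_ne_top hε3
  have hsint : Integrable s P := s.integrable_of_isFiniteMeasure
  have hfs : ∫ ω, |f ω - s ω| ∂P ≤ ε / 3 := by
    have h1 := integral_norm_eq_lintegral_enorm (hf.sub hsint).aestronglyMeasurable
    rw [← eLpNorm_one_eq_lintegral_enorm] at h1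
    have h2 := ENNReal.toReal_mono ENNReal.ofReal_ne_top hs.le
    rw [← h1, ENNReal.toReal_ofReal (by positivity)] at h2
    simpa using h2
  set m : ℝ := ∫ ω, s ω ∂P with hm
  have hmle : |m| ≤ ε / 3 := by
    have h1 : -m = ∫ ω, (f ω - s ω) ∂P := by rw [integral_sub hf hsint, hf0, zero_sub]
    rw [← abs_neg, h1]
    exact abs_integral_le_integral_abs.trans hfs
  have hmem : MemLp (fun ω => s ω - m) 2 P :=
    (s.memLp_of_isFiniteMeasure 2 P).sub (memLp_const m)
  have hh := hmem.coeFn_toLp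
  obtain ⟨g, hg⟩ := l2_coboundary_dense P T hT hmem.toLp (by
    rw [integral_congr_ae hh, integral_sub hsint (integrable_const m)]
    simp [hm]) (ε / 3) (by positivity)
  have hgint : Integrable g P := (Lp.memLp g).integrable (by norm_num)
  have hgTint : Integrable (fun ω => g (T ω)) P :=
    hT.toMeasurePreserving.integrable_comp_of_integrable hgint
  refine ⟨g, hgint, ?_⟩
  set d := hmem.toLp - (g - Lp.compMeasurePreserving T hT.toMeasurePreserving g) with hd
  have hdae : (d : Ω → ℝ) =ᵐ[P] fun ω => (s ω - m) - (g ω - g (T ω)) := by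
    filter_upwards [hh, Lp.coeFn_sub hmem.toLp
      (g - Lp.compMeasurePreserving T hT.toMeasurePreserving g),
      Lp.coeFn_sub g (Lp.compMeasurePreserving T hT.toMeasurePreserving g),
      Lp.coeFn_compMeasurePreserving g hT.toMeasurePreserving] with ω h1 h2 h3 h4
    rw [hd, h2, Pi.sub_apply, h1, h3, Pi.sub_apply, h4, Function.comp_apply]
  have hdle : ∫ ω, |(s ω - m) - (g ω - g (T ω))| ∂P ≤ ε / 3 := by
    have h0 : ∫ ω, |(s ω - m) - (g ω - g (T ω))| ∂P = ∫ ω, ‖d ω‖ ∂P := by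
      refine integral_congr_ae ?_
      filter_upwards [hdae] with ω h
      rw [h, Real.norm_eq_abs]
    rw [h0, integral_norm_eq_lintegral_enorm (Lp.aestronglyMeasurable d),
      ← eLpNorm_one_eq_lintegral_enorm]
    refine (ENNReal.toReal_mono (Lp.eLpNorm_ne_top d)
      (eLpNorm_le_eLpNorm_of_exponent_le (by norm_num) (Lp.aestronglyMeasurable d))).trans ?_
    rw [← Lp.norm_def]
    exact hg.le
  have i1 : Integrable (fun ω => |f ω - s ω|) P := (hf.sub hsint).abs
  have i2 : Integrable (fun ω => |(s ω - m) - (g ω - g (T ω))|) P :=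
    ((hsint.sub (integrable_const m)).sub (hgint.sub hgTint)).abs
  calc ∫ ω, |f ω - (g ω - g (T ω))| ∂P
      ≤ ∫ ω, (|f ω - s ω| + |(s ω - m) - (g ω - g (T ω))| + |m|) ∂P := by
        refine integral_mono (hf.sub (hgint.sub hgTint)).abs
          ((i1.add i2).add (integrable_const _)) fun ω => ?_
        have e : f ω - (g ω - g (T ω)) = (f ω - s ω) + ((s ω - m) - (g ω - g (T ω))) + m := by
          ring
        simp only [e]
        exact abs_add_three _ _ _
    _ = ∫ ω, |f ω - s ω| ∂P + ∫ ω, |(s ω - m) - (g ω - g (T ω))| ∂P + |m| := by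
        have e1 := integral_add (i1.add i2) (integrable_const (μ := P) |m|)
        have e2 := integral_add i1 i2
        simp only [Pi.add_apply] at e1 e2
        rw [e1, e2]
        simp
    _ ≤ ε := by linarith

lemma integral_abs_comp_iterate {Ω : Type*} [MeasurableSpace Ω] {P : Measure Ω}
    {T : Ω → Ω} (hT : MeasurePreserving T P P) {h : Ω → ℝ} (hh : Integrable h P) (k : ℕ) :
    ∫ ω, |h (T^[k] ω)| ∂P = ∫ ω, |h ω| ∂P := by
  have hk := hT.iterate k
  have := integral_map (μ := P) (φ := T^[k]) hk.measurable.aemeasurable (f := fun ω => |h ω|)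
    (by rw [hk.map_eq]; exact hh.abs.aestronglyMeasurable)
  rw [hk.map_eq] at this
  exact this.symm

lemma integrable_weighted {Ω : Type*} [MeasurableSpace Ω] {P : Measure Ω}
    {T : Ω → Ω} (hT : MeasurePreserving T P P) {h : Ω → ℝ} (hh : Integrable h P)
    (s : Finset ℕ) (a : ℕ → ℝ) (e : ℕ → ℕ) :
    Integrable (fun ω => ∑ t ∈ s, a t * h (T^[e t] ω)) P :=
  integrable_finsetSum _ fun t _ =>
    ((hT.iterate (e t)).integrable_comp_of_integrable hh).const_mul (a t)

lemma integral_abs_weighted_le {Ω : Type*} [MeasurableSpace Ω] {P : Measure Ω}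
    {T : Ω → Ω} (hT : MeasurePreserving T P P) {h : Ω → ℝ} (hh : Integrable h P)
    (s : Finset ℕ) (a : ℕ → ℝ) (e : ℕ → ℕ) :
    ∫ ω, |∑ t ∈ s, a t * h (T^[e t] ω)| ∂P ≤ (∑ t ∈ s, |a t|) * ∫ ω, |h ω| ∂P := by
  have hi : ∀ t ∈ s, Integrable (fun ω => |a t| * |h (T^[e t] ω)|) P := fun t _ =>
    ((hT.iterate (e t)).integrable_comp_of_integrable hh).abs.const_mul _
  calc ∫ ω, |∑ t ∈ s, a t * h (T^[e t] ω)| ∂P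
      ≤ ∫ ω, ∑ t ∈ s, |a t| * |h (T^[e t] ω)| ∂P := by
        refine integral_mono (integrable_weighted hT hh s a e).abs (integrable_finsetSum _ hi)
          fun ω => ?_
        simp only [← abs_mul]
        exact Finset.abs_sum_le_sum_abs _ _
    _ = (∑ t ∈ s, |a t|) * ∫ ω, |h ω| ∂P := by
        rw [integral_finsetSum _ hi, Finset.sum_mul]
        refine Finset.sum_congr rfl fun t _ => ?_
        rw [integral_const_mul, integral_abs_comp_iterate hT hh]

/-- The `L¹` norm of a weighted ergodic sum is controlled by the distance from `f` to a coboundary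
times the `ℓ¹` norm of the weights, plus (after summation by parts on the coboundary) the `L¹` norm
of the transfer function `g` times the total variation of the weights. -/
lemma integral_abs_weighted_le_coboundary {Ω : Type*} [MeasurableSpace Ω] {P : Measure Ω}
    {T : Ω → Ω} (hT : MeasurePreserving T P P) {f g : Ω → ℝ} (hf : Integrable f P)
    (hg : Integrable g P) (w : ℕ → ℝ) (n : ℕ) :
    ∫ ω, |∑ t ∈ Finset.Icc 1 n, w t * f (T^[t] ω)| ∂P ≤
      (∑ t ∈ Finset.Icc 1 n, |w t|) * ∫ ω, |f ω - (g ω - g (T ω))| ∂P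
        + (|w 1| + |w (n + 1)| + ∑ t ∈ Finset.Icc 1 n, |w (t + 1) - w t|) * ∫ ω, |g ω| ∂P := by
  have hgT : Integrable (fun ω => g (T ω)) P := hT.integrable_comp_of_integrable hg
  have hr : Integrable (fun ω => f ω - (g ω - g (T ω))) P := hf.sub (hg.sub hgT)
  have it : ∀ c : ℝ, ∀ k, Integrable (fun ω => |c| * |g (T^[k] ω)|) P := fun c k =>
    ((hT.iterate k).integrable_comp_of_integrable hg).abs.const_mul _
  have iA := (integrable_weighted hT hr (Finset.Icc 1 n) w (fun t => t)).abs
  have iD := (integrable_weighted hT hg (Finset.Icc 1 n) (fun t => w (t + 1) - w t)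
    (fun t => t + 1)).abs
  have bA := integral_abs_weighted_le hT hr (Finset.Icc 1 n) w (fun t => t)
  have bD := integral_abs_weighted_le hT hg (Finset.Icc 1 n) (fun t => w (t + 1) - w t)
    (fun t => t + 1)
  -- Write `f` as the coboundary `g - g ∘ T` plus a remainder; sum the coboundary by parts.
  have hpt : ∀ ω, |∑ t ∈ Finset.Icc 1 n, w t * f (T^[t] ω)| ≤
      |∑ t ∈ Finset.Icc 1 n, w t * (f (T^[t] ω) - (g (T^[t] ω) - g (T (T^[t] ω))))|
      + (|w 1| * |g (T^[1] ω)| + |w (n + 1)| * |g (T^[n + 1] ω)|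
        + |∑ t ∈ Finset.Icc 1 n, (w (t + 1) - w t) * g (T^[t + 1] ω)|) := by
    intro ω
    have h1 := sum_mul_sub_succ w (fun t => g (T^[t] ω)) n
    have h2 : ∑ t ∈ Finset.Icc 1 n, w t * f (T^[t] ω) =
        ∑ t ∈ Finset.Icc 1 n, w t * (f (T^[t] ω) - (g (T^[t] ω) - g (T (T^[t] ω))))
        + ∑ t ∈ Finset.Icc 1 n, w t * (g (T^[t] ω) - g (T^[t + 1] ω)) := by
      rw [← Finset.sum_add_distrib]
      refine Finset.sum_congr rfl fun t _ => ?_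
      rw [Function.iterate_succ_apply']
      ring
    rw [h2, h1]
    refine (abs_add_le _ _).trans (add_le_add le_rfl ((abs_add_le _ _).trans
      (add_le_add ((abs_sub _ _).trans ?_) le_rfl)))
    rw [abs_mul, abs_mul]
  refine (integral_mono (integrable_weighted hT hf (Finset.Icc 1 n) w (fun t => t)).abs
    (iA.add (((it _ _).add (it _ _)).add iD)) hpt).trans ?_
  have e1 := integral_add iA (((it (w 1) 1).add (it (w (n + 1)) (n + 1))).add iD)
  have e2 := integral_add ((it (w 1) 1).add (it (w (n + 1)) (n + 1))) iD
  have e3 := integral_add (it (w 1) 1) (it (w (n + 1)) (n + 1))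
  simp only [Pi.add_apply] at e1 e2 e3 ⊢
  rw [e1, e2, e3, integral_const_mul, integral_const_mul, integral_abs_comp_iterate hT hg,
    integral_abs_comp_iterate hT hg]
  linarith

/-- Rescaled kernel weights `L ((t - x) / s) / s` with `s ≥ 1` have bounded `ℓ¹` norm and total
variation `O(1 / s)`: only `O(s)` indices contribute, each weight is `O(1 / s)`, and by the
Lipschitz property consecutive weights differ by `O(1 / s ^ 2)`. -/
lemma kernel_weight_bounds (L : ℝ → ℝ) (LL : ℝ≥0) (hL : LipschitzWith LL L) (M R : ℝ)
    (hR0 : 0 ≤ R) (hM : ∀ v, |L v| ≤ M) (hR : ∀ v, R < |v| → L v = 0)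
    (x s : ℝ) (hs : 1 ≤ s) (n : ℕ) :
    ∑ t ∈ Finset.Icc 1 n, |L (((t : ℝ) - x) / s) / s| ≤ (2 * R + 1) * M ∧
    ∑ t ∈ Finset.Icc 1 n, |L ((((t + 1 : ℕ) : ℝ) - x) / s) / s - L (((t : ℝ) - x) / s) / s|
      ≤ (2 * R + 3) * LL / s := by
  have hs0 : 0 < s := by linarith
  have hM0 : 0 ≤ M := (abs_nonneg _).trans (hM 0)
  have hzero : ∀ y : ℝ, R * s < |y| → L (y / s) = 0 := fun y hy => by
    apply hR
    rwa [abs_div, abs_of_pos hs0, lt_div_iff₀ hs0]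
  constructor
  · refine (sum_abs_le_of_near (Finset.Icc 1 n) (fun t => L (((t : ℝ) - x) / s) / s) x (R * s)
      (M / s) (by positivity) (by positivity) (fun t _ => ?_) (fun t _ ht => ?_)).trans ?_
    · rw [abs_div, abs_of_pos hs0]
      gcongr
      exact hM _
    · rw [hzero _ ht, zero_div]
    · rw [mul_div_assoc', div_le_iff₀ hs0]
      nlinarith
  · refine (sum_abs_le_of_near (Finset.Icc 1 n)
      (fun t => L ((((t + 1 : ℕ) : ℝ) - x) / s) / s - L (((t : ℝ) - x) / s) / s) x (R * s + 1)
      (LL / s ^ 2) (by positivity) (by positivity) (fun t _ => ?_) (fun t _ ht => ?_)).trans ?_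
    · have h := hL.dist_le_mul ((((t + 1 : ℕ) : ℝ) - x) / s) (((t : ℝ) - x) / s)
      rw [Real.dist_eq, Real.dist_eq, ← sub_div] at h
      rw [← sub_div, abs_div, abs_of_pos hs0, div_le_iff₀ hs0]
      refine h.trans (le_of_eq ?_)
      have : (((t + 1 : ℕ) : ℝ) - x - ((t : ℝ) - x)) / s = 1 / s := by push_cast; ring
      rw [this, abs_of_pos (by positivity)]
      field_simp
    · have h1 : R * s < |((t + 1 : ℕ) : ℝ) - x| := by
        have := abs_sub_abs_le_abs_sub ((t : ℝ) - x) (((t + 1 : ℕ) : ℝ) - x)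
        have h2 : ((t : ℝ) - x) - (((t + 1 : ℕ) : ℝ) - x) = -1 := by push_cast; ring
        rw [h2, abs_neg, abs_one] at this
        linarith
      rw [hzero _ h1, hzero _ (by linarith)]
      simp
    · have : (2 * R + 3) * LL / s = ((2 * R + 3) * s) * (LL / s ^ 2) := by field_simp
      rw [this]
      gcongr
      linarith

/-- kernel-weighted ergodic law of large numbers. -/
theorem kernel_ergodic_lln
    {Ω : Type*} [MeasurableSpace Ω] (P : Measure Ω) [IsProbabilityMeasure P]
    (T : Ω → Ω) (hT : Ergodic T P)
    (f : Ω → ℝ) (hfint : Integrable f P) (hf0 : (∫ ω, f ω ∂P) = 0)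
    (L : ℝ → ℝ) (LL : ℝ≥0) (hLlip : LipschitzWith LL L) (hLsupp : HasCompactSupport L)
    (u : ℝ) (hu : u ∈ Set.Ioo (0:ℝ) 1)
    (b : ℕ → ℝ) (hbpos : ∀ n, 0 < b n)
    (hb0 : Tendsto b atTop (𝓝 0))
    (hnb : Tendsto (fun n : ℕ => (n : ℝ) * b n) atTop atTop) :
    TendstoInMeasure P
      (fun (n : ℕ) (ω : Ω) => (1 / (n : ℝ)) * ∑ t ∈ Finset.Icc 1 n,
        (L (((t : ℝ) / n - u) / b n) / b n) * f (T^[t] ω))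
      atTop (fun _ => (0 : ℝ)) := by
  have hTm := hT.toMeasurePreserving
  obtain ⟨M, hM⟩ := hLsupp.exists_bound_of_continuous hLlip.continuous
  simp only [Real.norm_eq_abs] at hM
  have hM0 : 0 ≤ M := (abs_nonneg _).trans (hM 0)
  obtain ⟨R, hR0, hR⟩ : ∃ R : ℝ, 0 ≤ R ∧ ∀ v, R < |v| → L v = 0 := by
    obtain ⟨R, hR⟩ := hLsupp.isBounded.subset_closedBall (0 : ℝ)
    refine ⟨max R 0, le_max_right _ _, fun v hv => ?_⟩
    by_contra h
    have := hR (subset_tsupport L h)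
    rw [mem_closedBall_zero_iff, Real.norm_eq_abs] at this
    linarith [le_max_left R 0]
  let K : ℕ → Ω → ℝ := fun n ω => (1 / (n : ℝ)) * ∑ t ∈ Finset.Icc 1 n,
        (L (((t : ℝ) / n - u) / b n) / b n) * f (T^[t] ω)
  let w : ℕ → ℕ → ℝ := fun n t => L (((t : ℝ) - n * u) / (n * b n)) / (n * b n)
  have hK : ∀ n ω, K n ω = ∑ t ∈ Finset.Icc 1 n, w n t * f (T^[t] ω) := by
    intro n ω
    simp only [K, w]
    rw [Finset.mul_sum]
    refine Finset.sum_congr rfl fun t ht => ?_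
    have hn : (n : ℝ) ≠ 0 := by
      have := Finset.mem_Icc.1 ht
      exact_mod_cast (by omega : n ≠ 0)
    have hb := (hbpos n).ne'
    have e : ((t : ℝ) / n - u) / b n = ((t : ℝ) - n * u) / (n * b n) := by field_simp
    rw [e]
    field_simp
  have hKint : ∀ n, Integrable (K n) P := by
    intro n
    rw [funext (hK n)]
    exact integrable_weighted hTm hfint (Finset.Icc 1 n) (w n) (fun t => t)
  have hlim : Tendsto (fun n => ∫ ω, |K n ω| ∂P) atTop (𝓝 0) := by
    set C : ℝ := (2 * R + 1) * M with hC
    have hC0 : 0 ≤ C := by positivity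
    rw [Metric.tendsto_nhds]
    intro ε hε
    obtain ⟨g, hg, hgle⟩ := l1_coboundary_dense P T hT f hfint hf0 (ε / (2 * (C + 1)))
      (by positivity)
    set G : ℝ := ∫ ω, |g ω| ∂P with hG
    have hG0 : 0 ≤ G := integral_nonneg fun _ => abs_nonneg _
    have hV : Tendsto (fun n : ℕ => (2 * M + (2 * R + 3) * LL) * G / ((n : ℝ) * b n)) atTop (𝓝 0) :=
      hnb.const_div_atTop _
    filter_upwards [hnb.eventually_ge_atTop 1, hV.eventually_lt_const (half_pos hε)] with n hn1 hn2
    have hs0 : 0 < (n : ℝ) * b n := by linarith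
    obtain ⟨hsum, hvar⟩ := kernel_weight_bounds L LL hLlip M R hR0 hM hR (n * u) (n * b n) hn1 n
    have hwle : ∀ t, |w n t| ≤ M / (n * b n) := fun t => by
      simp only [w]
      rw [abs_div, abs_of_pos hs0]
      gcongr
      exact hM _
    have hbound := integral_abs_weighted_le_coboundary hTm hfint hg (w n) n
    have h1 : (∑ t ∈ Finset.Icc 1 n, |w n t|) * ∫ ω, |f ω - (g ω - g (T ω))| ∂P ≤ ε / 2 := by
      have h11 : (∑ t ∈ Finset.Icc 1 n, |w n t|) * ∫ ω, |f ω - (g ω - g (T ω))| ∂P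
          ≤ C * (ε / (2 * (C + 1))) :=
        mul_le_mul hsum hgle (integral_nonneg fun _ => abs_nonneg _) hC0
      refine h11.trans ?_
      rw [mul_div_assoc', div_le_div_iff₀ (by positivity) (by positivity)]
      nlinarith
    have h2 : (|w n 1| + |w n (n + 1)| + ∑ t ∈ Finset.Icc 1 n, |w n (t + 1) - w n t|) * G
        ≤ (2 * M + (2 * R + 3) * LL) * G / ((n : ℝ) * b n) := by
      have h21 : |w n 1| + |w n (n + 1)| + ∑ t ∈ Finset.Icc 1 n, |w n (t + 1) - w n t|
          ≤ M / (n * b n) + M / (n * b n) + (2 * R + 3) * LL / (n * b n) :=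
        add_le_add (add_le_add (hwle _) (hwle _)) hvar
      refine (mul_le_mul_of_nonneg_right h21 hG0).trans (le_of_eq ?_)
      ring
    rw [Real.dist_eq, sub_zero, abs_of_nonneg (integral_nonneg fun _ => abs_nonneg _)]
    simp only [hK]
    linarith
  refine tendstoInMeasure_of_tendsto_eLpNorm one_ne_zero
    (fun n => (hKint n).aestronglyMeasurable) aestronglyMeasurable_const ?_
  have : ∀ n, eLpNorm (K n - fun _ => (0 : ℝ)) 1 P = ENNReal.ofReal (∫ ω, |K n ω| ∂P) := by
    intro n
    have e : (K n - fun _ => (0 : ℝ)) = K n := by ext; simp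
    rw [e, eLpNorm_one_eq_lintegral_enorm, ← ofReal_integral_norm_eq_lintegral_enorm (hKint n)]
    rfl
  exact (tendsto_congr this).2 (by simpa using ENNReal.tendsto_ofReal hlim)
end
end

section
/- Let Θ ⊆ ℝ^{d_θ} and let g:Θ→ℝ be a bounded measurable function with a unique maximum at θ₀ ∈ Θ, i.e. g(θ) < g(θ₀) for every θ ∈ Θ with θ ≠ θ₀. Let K:ℝ→ℝ be nonnegative and Lebesgue-measurable with compact support 𝒦 and ∫K(v)dv = 1. Fix m ≥ 0, let D(v) := (1, v, v²/2!, …, v^m/m!)′ ⊗ I_{d_θ}, and set A := {α ∈ ℝ^{(m+1)d_θ} : D(v)α ∈ Θ for all v ∈ 𝒦} and Q*(α) := ∫ K(v) g(D(v)α) dv. Then α* := (θ₀′, 0, …, 0)′ ∈ A satisfies Q*(α) < Q*(α*) for every α ∈ A with α ≠ α*; that is, α* is the unique maximizer of Q* over A. (Key step: for α ≠ α* the vector polynomial v ↦ D(v)α differs from the constant θ₀ for all but finitely many v, while the set {K > 0} has positive Lebesgue measure, so the integrand is strictly below g(θ₀) on a set of positive K-weighted measure.) -/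
/-!
For `α ≠ α*` some coordinate of `v ↦ D(v)α - D(v)α*` is a nonzero real polynomial, and
`D(v)α* = θ₀`, so `D(v)α = θ₀` for only finitely many `v` (`finite_setOf_Dact_eq`).  The integrand
`K(v) (g(θ₀) - g(D(v)α))` is nonnegative, and strictly positive on `{K ≠ 0}` off that finite set.
Since `∫ K = 1`, the set `{K ≠ 0}` has positive Lebesgue measure, hence the integral is positive.
-/

open MeasureTheory Filter
open scoped Topology

noncomputable section

/-- The local polynomial design map `D(v)α = Σ_{i=0}^m (v^i/i!) α_i`. -/
def Dact (m dθ : ℕ) (v : ℝ) (α : Fin (m + 1) → Fin dθ → ℝ) : Fin dθ → ℝ :=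
  ∑ i : Fin (m + 1), ((v ^ (i : ℕ)) / ((i : ℕ).factorial : ℝ)) • α i

lemma Dact_apply (m dθ : ℕ) (v : ℝ) (α : Fin (m + 1) → Fin dθ → ℝ) (j : Fin dθ) :
    Dact m dθ v α j = ∑ i : Fin (m + 1), v ^ (i : ℕ) / ((i : ℕ).factorial : ℝ) * α i j := by
  simp [Dact, Finset.sum_apply]

lemma Dact_const (m dθ : ℕ) (v : ℝ) (θ₀ : Fin dθ → ℝ) :
    Dact m dθ v (fun i => if i = 0 then θ₀ else 0) = θ₀ := by
  simp [Dact]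

lemma measurable_Dact (m dθ : ℕ) (α : Fin (m + 1) → Fin dθ → ℝ) :
    Measurable fun v => Dact m dθ v α := by
  unfold Dact
  fun_prop

/-- Distinct coefficient vectors give polynomials that agree at only finitely many points: some
coordinate of the difference is a nonzero real polynomial. -/
lemma finite_setOf_Dact_eq {m dθ : ℕ} {α β : Fin (m + 1) → Fin dθ → ℝ} (h : α ≠ β) :
    {v : ℝ | Dact m dθ v α = Dact m dθ v β}.Finite := by
  obtain ⟨i, hi⟩ := Function.ne_iff.mp h
  obtain ⟨j, hj⟩ := Function.ne_iff.mp hi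
  let p : Polynomial ℝ := ∑ k : Fin (m + 1),
    Polynomial.monomial (k : ℕ) ((α k j - β k j) / ((k : ℕ).factorial : ℝ))
  have hcoeff : p.coeff i = (α i j - β i j) / ((i : ℕ).factorial : ℝ) := by
    simp [p, Polynomial.finsetSum_coeff, Polynomial.coeff_monomial, Fin.val_inj]
  have hp : p ≠ 0 := by
    intro h0
    rw [h0, Polynomial.coeff_zero] at hcoeff
    exact div_ne_zero (sub_ne_zero.mpr hj) (by positivity) hcoeff.symm
  refine (Polynomial.finite_setOfPred_isRoot hp).subset fun v hv => ?_
  have hvj := congrFun (show Dact m dθ v α = Dact m dθ v β from hv) j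
  rw [Dact_apply, Dact_apply, ← sub_eq_zero, ← Finset.sum_sub_distrib] at hvj
  change p.eval v = 0
  rw [← hvj, Polynomial.eval_finsetSum]
  refine Finset.sum_congr rfl fun k _ => ?_
  rw [Polynomial.eval_monomial]
  ring

/-- identification of the local polynomial population criterion. -/
theorem local_polynomial_identification
    {dθ m : ℕ} (Θ : Set (Fin dθ → ℝ))
    (g : (Fin dθ → ℝ) → ℝ) (hgmeas : Measurable g)
    (Mg : ℝ) (hgbdd : ∀ θ', |g θ'| ≤ Mg)
    (θ₀ : Fin dθ → ℝ) (hθ₀ : θ₀ ∈ Θ)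
    (hgmax : ∀ θ' ∈ Θ, θ' ≠ θ₀ → g θ' < g θ₀)
    (K : ℝ → ℝ) (hKmeas : Measurable K) (hK0 : ∀ v, 0 ≤ K v)
    (hKsupp : HasCompactSupport K) (hKint : (∫ v, K v) = 1)
    (A : Set (Fin (m + 1) → Fin dθ → ℝ))
    (hA : A = {α | ∀ v ∈ tsupport K, Dact m dθ v α ∈ Θ})
    (αstar : Fin (m + 1) → Fin dθ → ℝ)
    (hαstar : αstar = fun i => if i = 0 then θ₀ else 0) :
    αstar ∈ A ∧
      ∀ α ∈ A, α ≠ αstar →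
        (∫ v, K v * g (Dact m dθ v α)) < ∫ v, K v * g (Dact m dθ v αstar) := by
  subst hA hαstar
  refine ⟨fun v _ => by rwa [Dact_const], fun α hα hne => ?_⟩
  have hfin := finite_setOf_Dact_eq hne
  simp only [Dact_const] at hfin ⊢
  -- A non-integrable `K` would have Bochner integral `0`.
  have hKi : Integrable K := by
    by_contra hn
    rw [integral_undef hn] at hKint
    exact zero_ne_one hKint
  have hi₁ : Integrable fun v => K v * g (Dact m dθ v α) :=
    hKi.mul_bdd (c := Mg) (hgmeas.comp (measurable_Dact m dθ α)).aestronglyMeasurable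
      (ae_of_all _ fun v => hgbdd _)
  have hi₂ : Integrable fun v => K v * g θ₀ := hKi.mul_const _
  have hmem : ∀ v, K v ≠ 0 → Dact m dθ v α ∈ Θ := fun v hv => hα v (subset_tsupport K hv)
  have hnonneg : ∀ v, 0 ≤ K v * g θ₀ - K v * g (Dact m dθ v α) := by
    intro v
    by_cases hv : K v = 0
    · simp [hv]
    by_cases he : Dact m dθ v α = θ₀
    · simp [he]
    exact sub_nonneg.mpr (mul_le_mul_of_nonneg_left (hgmax _ (hmem v hv) he).le (hK0 v))
  have hKpos : 0 < volume (Function.support K) :=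
    (integral_pos_iff_support_of_nonneg hK0 hKi).mp (hKint ▸ zero_lt_one)
  rw [← sub_pos, ← integral_sub hi₂ hi₁]
  refine (integral_pos_iff_support_of_nonneg hnonneg (hi₂.sub hi₁)).mpr ?_
  rw [← measure_sdiff_null (hfin.measure_zero volume)] at hKpos
  refine hKpos.trans_le (measure_mono ?_)
  rintro v ⟨hv, he⟩
  exact (sub_pos.mpr (mul_lt_mul_of_pos_left (hgmax _ (hmem v hv) he)
    ((hK0 v).lt_of_ne' hv))).ne'
end
end
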